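/- arXiv:2303.04085 — 4 statements merged into one kernel-verified Lean document; each statement's English description precedes it below -/
import Mathlib

section
/- Let p be a prime and r a natural number. If the elementary abelian group (Z_p)^r is not a DCI group, then (Z_p)^{r+3} is not a CI group. -/
/-!
Let `V = (ℤ_p)^r` and let `S, S' ⊆ V` have isomorphic Cayley digraphs, through a bijection `e` of
`V` with `e 0 = 0`, without being related by a linear automorphism of `V`. Everything in sight is
`𝔽_p`-linear, since additive maps between elementary abelian `p`-groups are.

If `p = 2`, every subset is symmetric, and `S` and `S'` placed inside a subspace `V × 0` work
(an isomorphism between subspaces extends to an automorphism).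

If `p` is odd, write `F = 𝔽_p` and consider in `(V × F) × F²`, with `e₁, e₂` the standard basis of
`F²`, the symmetric set
`T(S) = (V × F) × 0 ∪ ±((S × 0) × e₁) ∪ {±(0, e₂), ±(0, e₁ + e₂)}`.
The map `e × id` is an isomorphism from the Cayley graph of `T(S)` to that of `T(S')`. Suppose a
linear automorphism `Φ` takes `T(S)` to `T(S')`, with `S` neither `V` nor of size at most one.

* `Φ` preserves `(V × F) × 0` (`conn_snd_eq_zero`). Otherwise let `f` be the `F²`-component of `Φ`
  on this space. Its image avoids `(1, -1)`, so it has dimension at most one and `ker f` has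
  dimension at least `dim V`. Translating `ker f` by a vector outside it, one finds in a fibre of
  `T(S')` over a nonzero vector of `F²` a translate of the image of `ker f`, hence
  all of `V × 0`. This is absurd: such a fibre is `S' × 0`, `-S' × 0`, `0` or empty.
* `Φ` then induces an automorphism of `F²`. It preserves `±e₁`, as the only vectors with fibres of
  size more than one, hence it preserves `{±e₂, ±(e₁ + e₂)}`, so `Φ` fixes `0 × F²` setwise: no
  shear is left. Therefore `Φ` restricted to `V × F` takes `S × 0` into `±S' × 0`, and onto it by
  counting (`exists_linear_of_conn`).
* A linear isomorphism from the span of `S` to the span of `S'` extends to `V`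
  (`exists_linearEquiv_of_image_eq`), contradicting the choice of `S` and `S'`.
-/


/-- Edge relation of the Cayley digraph `Cay⃗(G;S)` of the additive group `G` with
connection set `S`: there is a directed edge from `g` to `h` iff `h ∈ S + g`,
i.e. iff `h - g ∈ S`. -/
def cayleyRel {G : Type*} [AddGroup G] (S : Set G) : G → G → Prop :=
  fun g h => h - g ∈ S

/-- Isomorphism of digraphs (or of undirected graphs, viewed via their symmetric
edge relations): a bijection of the vertex sets such that there is an edge from `x`
to `y` iff there is one from the image of `x` to the image of `y`. -/
def DigraphIso {V W : Type*} (r : V → V → Prop) (s : W → W → Prop) : Prop :=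
  ∃ e : V ≃ W, ∀ x y, r x y ↔ s (e x) (e y)

/-- `Cay⃗(G;S)` is a DCI digraph: for every `S' ⊆ G` with `Cay⃗(G;S) ≅ Cay⃗(G;S')`
there is a group automorphism of `G` carrying `S` to `S'`. -/
def IsDCIDigraph {G : Type*} [AddGroup G] (S : Set G) : Prop :=
  ∀ S' : Set G, DigraphIso (cayleyRel S) (cayleyRel S') → ∃ α : G ≃+ G, α '' S = S'

/-- `G` is a DCI group: every Cayley digraph of `G` is a DCI digraph. -/
def IsDCIGroup (G : Type*) [AddGroup G] : Prop :=
  ∀ S : Set G, IsDCIDigraph S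

/-- For symmetric `S` (`S = -S`), `Cay(G;S)` is a CI graph: for every symmetric
`S' ⊆ G` with `Cay(G;S) ≅ Cay(G;S')` there is a group automorphism of `G`
carrying `S` to `S'`. -/
def IsCIGraph {G : Type*} [AddGroup G] (S : Set G) : Prop :=
  ∀ S' : Set G, S' = -S' → DigraphIso (cayleyRel S) (cayleyRel S') →
    ∃ α : G ≃+ G, α '' S = S'

/-- `G` is a CI group: every Cayley graph of `G` (i.e. for symmetric connection
sets) is a CI graph. -/
def IsCIGroup (G : Type*) [AddGroup G] : Prop :=
  ∀ S : Set G, S = -S → IsCIGraph S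

/-- Two subsets of a finite-dimensional space that become equal under two linear embeddings are
related by an automorphism: the isomorphism induced between their spans extends. -/
lemma exists_linearEquiv_of_image_eq {F V M : Type*} [Field F] [AddCommGroup V] [Module F V]
    [FiniteDimensional F V] [AddCommGroup M] [Module F M] (S S' : Set V) (L ι : V →ₗ[F] M)
    (hL : Function.Injective L) (hι : Function.Injective ι) (h : L '' S = ι '' S') :
    ∃ α : V ≃ₗ[F] V, α '' S = S' := by
  have hmap : (Submodule.span F S).map L = (Submodule.span F S').map ι := by
    rw [Submodule.map_span, Submodule.map_span, h]
  let f : Submodule.span F S ≃ₗ[F] Submodule.span F S' :=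
    (Submodule.equivMapOfInjective L hL _).trans
      ((LinearEquiv.ofEq _ _ hmap).trans (Submodule.equivMapOfInjective ι hι _).symm)
  have hf : ∀ x, ι (f x : V) = L x := by
    intro x
    have h1 : Submodule.equivMapOfInjective ι hι _ (f x) =
        LinearEquiv.ofEq _ _ hmap (Submodule.equivMapOfInjective L hL _ x) := by
      simp [f]
    have h2 := congrArg Subtype.val h1
    simpa using h2
  obtain ⟨g, hg⟩ := Submodule.exists_linearEquiv_restrict_eq f
  refine ⟨g, hι.image_injective ?_⟩
  rw [← h, Set.image_image]
  refine Set.image_congr fun s hs => ?_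
  have := hg ⟨s, Submodule.subset_span hs⟩
  rw [← hf ⟨s, Submodule.subset_span hs⟩, this]

/-- The general linear group is transitive on nonzero vectors. -/
lemma exists_linearEquiv_apply_eq {F V : Type*} [Field F] [AddCommGroup V] [Module F V]
    (x y : V) (h : x = 0 ↔ y = 0) : ∃ α : V ≃ₗ[F] V, α x = y := by
  by_cases hx : x = 0
  · exact ⟨LinearEquiv.refl F V, by simp [hx, h.1 hx]⟩
  · have hy : y ≠ 0 := fun hy => hx (h.2 hy)
    obtain ⟨g, hg⟩ := Submodule.exists_linearEquiv_restrict_eq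
      ((LinearEquiv.toSpanNonzeroSingleton F V x hx).symm.trans
        (LinearEquiv.toSpanNonzeroSingleton F V y hy))
    refine ⟨g, ?_⟩
    have := hg (LinearEquiv.toSpanNonzeroSingleton F V x hx 1)
    rw [LinearEquiv.trans_apply, LinearEquiv.symm_apply_apply] at this
    simpa using this.symm

/-- The symmetric set `T(S) ⊆ (V × F) × F²`: all of `V × F` over `0`, the sets `S × 0` and `-S × 0`
over `(1, 0)` and `(-1, 0)`, the point `0` over `±(0, 1)` and `±(1, 1)`, and nothing elsewhere. -/
def conn {F V : Type*} [Field F] [AddCommGroup V] (S : Set V) : Set ((V × F) × (F × F)) :=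
  {x | x.2 = 0 ∨ (x.2 = (1, 0) ∧ x.1.2 = 0 ∧ x.1.1 ∈ S) ∨
    (x.2 = (-1, 0) ∧ x.1.2 = 0 ∧ -x.1.1 ∈ S) ∨
    (x.1 = 0 ∧ (x.2 = (0, 1) ∨ x.2 = (0, -1) ∨ x.2 = (1, 1) ∨ x.2 = (-1, -1)))}

lemma conn_symm {F V : Type*} [Field F] [AddCommGroup V] (S : Set V) :
    (conn S : Set ((V × F) × (F × F))) = - conn S := by
  ext ⟨⟨v, t⟩, a, b⟩
  simp only [conn, Set.mem_neg, Set.mem_ofPred_eq, neg_neg, Prod.neg_mk,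
    Prod.mk.injEq, Prod.mk_eq_zero, neg_eq_iff_eq_neg, neg_zero]
  tauto

/-- The map `e × id` is an isomorphism between the Cayley graphs of `T(S)` and `T(S')`. -/
lemma conn_iso {F V : Type*} [Field F] [AddCommGroup V] (S S' : Set V)
    (h : DigraphIso (cayleyRel S) (cayleyRel S')) :
    DigraphIso (cayleyRel (conn S : Set ((V × F) × (F × F))))
      (cayleyRel (conn S' : Set ((V × F) × (F × F)))) := by
  obtain ⟨e, he⟩ := h
  refine ⟨(e.prodCongr (Equiv.refl F)).prodCongr (Equiv.refl (F × F)), ?_⟩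
  rintro ⟨⟨v, t⟩, w⟩ ⟨⟨v', t'⟩, w'⟩
  have h1 := he v v'
  have h2 := he v' v
  have h3 : v' - v = 0 ↔ e v' - e v = 0 := by simp [sub_eq_zero]
  simp only [cayleyRel] at h1 h2
  simp only [cayleyRel, conn, Set.mem_ofPred_eq, Equiv.prodCongr_apply, Prod.map, Equiv.refl_apply,
    Prod.mk_sub_mk, neg_sub, h1, h2, Prod.mk_eq_zero, h3]

lemma conn_cases {F V : Type*} [Field F] [AddCommGroup V] {S : Set V}
    {x : (V × F) × (F × F)} (hx : x ∈ conn S) (h0 : x.2 ≠ 0) :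
    x.1.2 = 0 ∧ ((x.2 = (1, 0) ∧ x.1.1 ∈ S) ∨ (x.2 = (-1, 0) ∧ -x.1.1 ∈ S) ∨ x.1.1 = 0) := by
  rcases hx with h | h | h | h
  · exact absurd h h0
  · tauto
  · tauto
  · simp [h.1]

lemma conn_ne {F V : Type*} [Field F] [AddCommGroup V] (h2 : (2 : F) ≠ 0) {S : Set V}
    {x : (V × F) × (F × F)} (hx : x ∈ conn S) : x.2 ≠ (1, -1) := by
  have h3 : (1 : F) ≠ -1 := by
    intro h; apply h2; linear_combination h
  intro h
  simp only [conn, Set.mem_ofPred_eq, h, Prod.mk.injEq, Prod.mk_eq_zero] at hx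
  simp [h3.symm, h3] at hx

/-- In characteristic other than two and for `S' ≠ V`, a linear automorphism taking `T(S)` into
`T(S')` preserves the subspace `(V × F) × 0`. -/
lemma conn_snd_eq_zero {F V : Type*} [Field F] [AddCommGroup V] [Module F V]
    [FiniteDimensional F V] [Nontrivial V] (h2 : (2 : F) ≠ 0) (S S' : Set V) (hS' : S' ≠ Set.univ)
    (Φ : ((V × F) × (F × F)) ≃ₗ[F] ((V × F) × (F × F)))
    (hΦ : ∀ x ∈ conn S, Φ x ∈ conn S') (x : V × F) : (Φ (x, 0)).2 = 0 := by
  by_contra hx0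
  let f : (V × F) →ₗ[F] (F × F) := (LinearMap.snd F _ _ ∘ₗ Φ.toLinearMap) ∘ₗ LinearMap.inl F _ _
  have hf : ∀ y, f y = (Φ (y, 0)).2 := fun _ => rfl
  have hmem : ∀ y : V × F, Φ (y, 0) ∈ conn S' := fun y => hΦ _ (Or.inl rfl)
  have hrange : Module.finrank F (LinearMap.range f) < 2 := by
    have hlt : LinearMap.range f < ⊤ := by
      refine lt_top_iff_ne_top.2 fun htop => ?_
      have : ((1, -1) : F × F) ∈ LinearMap.range f := htop ▸ Submodule.mem_top
      obtain ⟨y, hy⟩ := this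
      exact conn_ne h2 (hmem y) hy
    have := Submodule.finrank_lt (lt_top_iff_ne_top.1 hlt)
    simpa using this
  have hdim := LinearMap.finrank_range_add_finrank_ker f
  rw [Module.finrank_prod, Module.finrank_self] at hdim
  let g : LinearMap.ker f →ₗ[F] V :=
    ((LinearMap.fst F V F ∘ₗ LinearMap.fst F _ (F × F)) ∘ₗ Φ.toLinearMap) ∘ₗ
      LinearMap.inl F (V × F) (F × F) ∘ₗ (LinearMap.ker f).subtype
  have hg : ∀ n : LinearMap.ker f, g n = (Φ ((n : V × F), 0)).1.1 := fun _ => rfl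
  have hadd : ∀ n : LinearMap.ker f, Φ (x + (n : V × F), 0) = Φ (x, 0) + Φ ((n : V × F), 0) := by
    intro n; rw [← map_add]; simp
  have hker : ∀ n : LinearMap.ker f, (Φ ((n : V × F), 0)).2 = 0 := fun n => n.2
  -- the translate of `ker f` by `x` lands in the fibre of `T(S')` over `f x ≠ 0`
  have hfib : ∀ n : LinearMap.ker f, (Φ (x + (n : V × F), 0)).2 = (Φ (x, 0)).2 := by
    intro n; rw [hadd, Prod.snd_add, hker, add_zero]
  have hcases := fun n : LinearMap.ker f =>
    conn_cases (hmem (x + (n : V × F))) (by rw [hfib]; exact hx0)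
  have hz : ∀ n : LinearMap.ker f, (Φ ((n : V × F), 0)).1.2 = 0 := by
    intro n
    have h0 := (conn_cases (hmem x) hx0).1
    have h1 := (hcases n).1
    rw [hadd, Prod.fst_add, Prod.snd_add, h0, zero_add] at h1
    exact h1
  have hginj : Function.Injective g := by
    rw [injective_iff_map_eq_zero]
    intro n hn
    have : Φ ((n : V × F), 0) = 0 := Prod.ext (Prod.ext hn (hz n)) (hker n)
    have h3 := (map_eq_zero_iff Φ Φ.injective).1 this
    exact Subtype.ext (congrArg Prod.fst h3)
  have hgsurj : Function.Surjective g := by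
    have hle := LinearMap.finrank_le_finrank_of_injective hginj
    exact (LinearMap.injective_iff_surjective_of_finrank_eq_finrank (by omega)).1 hginj
  have hall : ∀ v : V, ((v, (0 : F)), (Φ (x, 0)).2) ∈ conn S' := by
    intro v
    obtain ⟨n, hn⟩ := hgsurj (v - (Φ (x, 0)).1.1)
    have hv : (Φ (x + (n : V × F), 0)).1.1 = v := by
      rw [hadd, Prod.fst_add, Prod.fst_add, ← hg, hn]; abel
    have : Φ (x + (n : V × F), 0) = ((v, 0), (Φ (x, 0)).2) :=
      Prod.ext (Prod.ext hv (hcases n).1) (hfib n)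
    exact this ▸ hmem (x + n)
  have h3 : (1 : F) ≠ -1 := by
    intro h; apply h2; linear_combination h
  obtain ⟨v₁, hv₁⟩ := exists_ne (0 : V)
  -- the nonzero `v₁` shows that the fibre is one of those over `±(1, 0)`, which are not full
  rcases (conn_cases (hall v₁) hx0).2 with ⟨h, -⟩ | ⟨h, -⟩ | h
  · refine hS' (Set.eq_univ_of_forall fun v => ?_)
    have := hall v
    change (Φ (x, 0)).2 = (1, 0) at h
    simpa [conn, h, h3] using this
  · refine hS' (Set.eq_univ_of_forall fun v => ?_)
    have := hall (-v)
    change (Φ (x, 0)).2 = (-1, 0) at h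
    simpa [conn, h, h3.symm] using this
  · exact hv₁ h

/-- Let `S` have at least two elements. If a linear automorphism preserving `(V × F) × 0` takes
`T(S)` into `T(S')`, then, up to sign, its restriction to `V × F` takes `S × 0` into `S' × 0`. -/
lemma exists_linear_of_conn {F V : Type*} [Field F] [AddCommGroup V] [Module F V]
    [FiniteDimensional F V] (h2 : (2 : F) ≠ 0) (S S' : Set V) (hS : S.Nontrivial)
    (Φ : ((V × F) × (F × F)) ≃ₗ[F] ((V × F) × (F × F)))
    (hΦ : ∀ x ∈ conn S, Φ x ∈ conn S') (hV : ∀ x, (Φ (x, 0)).2 = 0) :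
    ∃ L : V →ₗ[F] V × F, Function.Injective L ∧ ∀ s ∈ S, ∃ s' ∈ S', L s = (s', 0) := by
  have h3 : (1 : F) ≠ -1 := by
    intro h; apply h2; linear_combination h
  let A : (V × F) →ₗ[F] (V × F) :=
    (LinearMap.fst F _ _ ∘ₗ Φ.toLinearMap) ∘ₗ LinearMap.inl F _ (F × F)
  have hA : ∀ x, Φ (x, 0) = (A x, 0) := fun x => Prod.ext rfl (hV x)
  have hAinj : Function.Injective A := by
    intro x y hxy
    have : Φ (x, 0) = Φ (y, 0) := by rw [hA, hA, hxy]
    exact congrArg Prod.fst (Φ.injective this)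
  have hAsurj : Function.Surjective A := LinearMap.injective_iff_surjective.1 hAinj
  have hsplit : ∀ x w, Φ (x, w) = (A x, 0) + Φ (0, w) := by
    intro x w; rw [← hA, ← map_add]; simp
  have hsnd : ∀ x w, (Φ (x, w)).2 = (Φ (0, w)).2 := by
    intro x w; rw [hsplit]; simp
  -- the map induced on `F²` is injective
  have hΨ : ∀ w, (Φ (0, w)).2 = 0 → w = 0 := by
    intro w hw
    obtain ⟨x, hx⟩ := hAsurj (Φ (0, w)).1
    have : Φ (x, 0) = Φ (0, w) := by rw [hA, hx]; exact Prod.ext rfl hw.symm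
    exact (congrArg Prod.snd (Φ.injective this)).symm
  have he₁ : ∃ c : F, (c = 1 ∨ c = -1) ∧ (Φ (0, (1, 0))).2 = (c, 0) := by
    obtain ⟨s₁, hs₁, s₂, hs₂, hne⟩ := hS
    have hmem : ∀ s ∈ S, Φ ((s, 0), (1, 0)) ∈ conn S' := fun s hs =>
      hΦ _ (Or.inr (Or.inl ⟨rfl, rfl, hs⟩))
    have hnz : ∀ s, (Φ ((s, 0), (1, 0))).2 ≠ 0 := fun s h => by
      rw [hsnd] at h; simpa using hΨ _ h
    obtain ⟨h1, h1'⟩ := conn_cases (hmem s₁ hs₁) (hnz s₁)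
    obtain ⟨h4, h4'⟩ := conn_cases (hmem s₂ hs₂) (hnz s₂)
    rw [hsnd] at h1' h4'
    rcases h1' with h | h | h
    · exact ⟨1, Or.inl rfl, h.1⟩
    · exact ⟨-1, Or.inr rfl, h.1⟩
    · rcases h4' with h' | h' | h'
      · exact ⟨1, Or.inl rfl, h'.1⟩
      · exact ⟨-1, Or.inr rfl, h'.1⟩
      · refine absurd ?_ hne
        have : Φ ((s₁, 0), (1, 0)) = Φ ((s₂, 0), (1, 0)) :=
          Prod.ext (Prod.ext (h.trans h'.symm) (h1.trans h4.symm))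
            ((hsnd _ _).trans (hsnd _ _).symm)
        simpa using Φ.injective this
  obtain ⟨c, hc, hc₁⟩ := he₁
  -- vectors off the line of `(1, 0)` are not sent to `±(1, 0)`
  have hoff : ∀ a : F, ∀ d : F, (Φ (0, (a, 1))).2 ≠ (d, 0) := by
    intro a d h
    have hcc : c * c = 1 := by rcases hc with rfl | rfl <;> ring
    have h5 : Φ (0, (a - d * c, 1)) = Φ (0, (a, 1)) - (d * c) • Φ (0, (1, 0)) := by
      rw [← map_smul, ← map_sub]; simp
    have h6 : (Φ (0, (a - d * c, 1))).2 = 0 := by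
      rw [h5, Prod.snd_sub, Prod.smul_snd, h, hc₁]
      ext
      · simp [mul_assoc, hcc]
      · simp
    simpa using hΨ _ h6
  have hfix : ∀ a : F, (((0 : V × F), (a, (1 : F))) ∈ conn S) → (Φ (0, (a, 1))).1 = 0 := by
    intro a ha
    have hnz : (Φ (0, (a, 1))).2 ≠ 0 := fun h => by simpa using hΨ _ h
    obtain ⟨h1, h | h | h⟩ := conn_cases (hΦ _ ha) hnz
    · exact absurd h.1 (hoff _ _)
    · exact absurd h.1 (hoff _ _)
    · exact Prod.ext h h1
  have he₁fix : Φ (0, (1, 0)) = (0, (c, 0)) := by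
    refine Prod.ext ?_ hc₁
    have h5 : Φ (0, (1, 0)) = Φ (0, (1, 1)) - Φ (0, (0, 1)) := by
      rw [← map_sub]; simp
    rw [h5, Prod.fst_sub, hfix 1 (by simp [conn]), hfix 0 (by simp [conn]), sub_zero]
  have hS' : ∀ s ∈ S, ((A (s, 0), (c, 0)) : (V × F) × (F × F)) ∈ conn S' := by
    intro s hs
    have := hΦ ((s, 0), (1, 0)) (Or.inr (Or.inl ⟨rfl, rfl, hs⟩))
    rw [hsplit, he₁fix] at this
    simpa using this
  have hinl : Function.Injective (LinearMap.inl F V F) := LinearMap.inl_injective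
  rcases hc with rfl | rfl
  · refine ⟨A ∘ₗ LinearMap.inl F V F, hAinj.comp hinl, fun s hs => ⟨(A (s, 0)).1, ?_, ?_⟩⟩
    · have := hS' s hs
      simp [conn, h3] at this
      exact this.2
    · exact Prod.ext rfl (conn_cases (hS' s hs) (by simp)).1
  · refine ⟨-(A ∘ₗ LinearMap.inl F V F), neg_injective.comp (hAinj.comp hinl),
      fun s hs => ⟨-(A (s, 0)).1, ?_, ?_⟩⟩
    · have := hS' s hs
      simp [conn, h3.symm] at this
      exact this.2
    · have := (conn_cases (hS' s hs) (by simp)).1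
      exact Prod.ext rfl (by simpa using this)

lemma IsCIGroup.of_addEquiv {G H : Type*} [AddGroup G] [AddGroup H] (φ : G ≃+ H)
    (h : IsCIGroup G) : IsCIGroup H := by
  have hneg : ∀ S : Set H, S = -S → φ ⁻¹' S = -(φ ⁻¹' S) := by
    intro S hS
    ext x
    rw [Set.mem_neg, Set.mem_preimage, Set.mem_preimage, map_neg, ← Set.mem_neg, ← hS]
  rintro S hS S' hS' ⟨e, he⟩
  obtain ⟨α, hα⟩ := h (φ ⁻¹' S) (hneg S hS) (φ ⁻¹' S') (hneg S' hS')
    ⟨(φ.toEquiv.trans e).trans φ.symm.toEquiv, fun x y => by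
      have := he (φ x) (φ y)
      simpa [cayleyRel] using this⟩
  refine ⟨(φ.symm.trans α).trans φ, ?_⟩
  have h1 : φ '' (α '' (φ ⁻¹' S)) = S' := by
    rw [hα, Set.image_preimage_eq _ φ.surjective]
  rw [← h1]
  conv_lhs => rw [← Set.image_preimage_eq S φ.surjective]
  simp [Set.image_image]

/-- If `(V × F) × F²` is a CI group, `F` being the prime field, then connection sets whose Cayley
digraphs on `V` are isomorphic through a map fixing `0` are related by a linear automorphism. -/
lemma exists_linearEquiv_of_isCIGroup {p : ℕ} [Fact p.Prime] {V : Type*} [AddCommGroup V]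
    [Module (ZMod p) V] [Finite V]
    (h : IsCIGroup ((V × ZMod p) × (ZMod p × ZMod p))) (S S' : Set V) (e : V ≃ V) (he0 : e 0 = 0)
    (he : ∀ x y, y - x ∈ S ↔ e y - e x ∈ S') : ∃ α : V ≃ₗ[ZMod p] V, α '' S = S' := by
  have hiso : DigraphIso (cayleyRel S) (cayleyRel S') := ⟨e, he⟩
  have heS : e '' S = S' := by
    ext y
    have := he 0 (e.symm y)
    simp only [sub_zero, he0, e.apply_symm_apply] at this
    rw [← this, e.image_eq_preimage_symm, Set.mem_preimage]
  have hcard : S.ncard = S'.ncard := by rw [← heS, Set.ncard_image_of_injective _ e.injective]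
  rcases S.subsingleton_or_nontrivial with hsub | hS
  · rcases hsub.eq_empty_or_singleton with rfl | ⟨s, rfl⟩
    · exact ⟨LinearEquiv.refl _ _, by simp [← heS]⟩
    · obtain ⟨α, hα⟩ := exists_linearEquiv_apply_eq (F := ZMod p) s (e s)
        ⟨fun h => by rw [h, he0], fun h => e.injective (h.trans he0.symm)⟩
      exact ⟨α, by simp [← heS, hα]⟩
  have : Nontrivial V := by
    obtain ⟨x, -, y, -, hxy⟩ := hS
    exact ⟨x, y, hxy⟩
  by_cases hp : (2 : ZMod p) = 0
  · have hneg : ∀ x : V, -x = x := fun x => by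
      have : (2 : ZMod p) • x = 0 := by rw [hp, zero_smul]
      rw [two_smul] at this
      exact neg_eq_of_add_eq_zero_left this
    have hneg' : ∀ x : ZMod p, -x = x := fun x => by
      linear_combination -x * hp
    let ι : V →ₗ[ZMod p] (V × ZMod p) × (ZMod p × ZMod p) :=
      LinearMap.inl _ _ _ ∘ₗ LinearMap.inl _ _ _
    have hι : Function.Injective ι := LinearMap.inl_injective.comp LinearMap.inl_injective
    have hιm : ∀ (R : Set V) x, x ∈ ι '' R ↔ x.1.1 ∈ R ∧ x.1.2 = 0 ∧ x.2 = 0 := by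
      rintro R ⟨⟨v, t⟩, w⟩
      simp only [ι, Set.mem_image, LinearMap.comp_apply, LinearMap.inl_apply, Prod.mk.injEq]
      constructor
      · rintro ⟨x, hx, ⟨rfl, rfl⟩, rfl⟩
        exact ⟨hx, rfl, rfl⟩
      · rintro ⟨hv, rfl, rfl⟩
        exact ⟨v, hv, ⟨rfl, rfl⟩, rfl⟩
    have hsym : ∀ R : Set V, ι '' R = - (ι '' R) := by
      intro R
      ext x
      rw [Set.mem_neg, hιm, hιm]
      simp [hneg]
    obtain ⟨α, hα⟩ := h _ (hsym S) _ (hsym S')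
      ⟨(e.prodCongr (Equiv.refl _)).prodCongr (Equiv.refl _), fun x y => by
        simp only [cayleyRel, hιm]
        simp [he]⟩
    refine exists_linearEquiv_of_image_eq S S'
      (α.toAddMonoidHom.toZModLinearMap p ∘ₗ ι) ι (α.injective.comp hι) hι ?_
    rw [← hα, Set.image_image]
    rfl
  · by_cases huniv : S' = Set.univ
    · have : S = Set.univ := by
        rw [← e.preimage_image S, heS, huniv, Set.preimage_univ]
      exact ⟨LinearEquiv.refl _ _, by simp [this, huniv]⟩
    obtain ⟨α, hα⟩ := h _ (conn_symm S) _ (conn_symm S') (conn_iso S S' hiso)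
    let Φ : ((V × ZMod p) × (ZMod p × ZMod p)) ≃ₗ[ZMod p] ((V × ZMod p) × (ZMod p × ZMod p)) :=
      { α with map_smul' := ZMod.map_smul α }
    have hΦ : ∀ x ∈ conn S, Φ x ∈ conn S' := fun x hx => hα ▸ Set.mem_image_of_mem α hx
    obtain ⟨L, hL, hLS⟩ := exists_linear_of_conn hp S S' hS Φ hΦ
      (conn_snd_eq_zero hp S S' huniv Φ hΦ)
    have hinl : Function.Injective (LinearMap.inl (ZMod p) V (ZMod p)) := LinearMap.inl_injective
    refine exists_linearEquiv_of_image_eq S S' L (LinearMap.inl (ZMod p) V (ZMod p)) hL hinl ?_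
    refine Set.eq_of_subset_of_ncard_le ?_ ?_ (Set.toFinite _)
    · rintro _ ⟨s, hs, rfl⟩
      obtain ⟨s', hs', h'⟩ := hLS s hs
      exact ⟨s', hs', h'.symm⟩
    · rw [Set.ncard_image_of_injective _ hL, Set.ncard_image_of_injective _ hinl, hcard]

/-- If `(ℤ_p)^r` is not a DCI group (`p` prime), then `(ℤ_p)^(r+3)` is not a CI group. -/
theorem nonDCI_implies_nonCI_rplus3 (p : ℕ) (hp : p.Prime) (r : ℕ)
    (h : ¬ IsDCIGroup (Fin r → ZMod p)) :
    ¬ IsCIGroup (Fin (r + 3) → ZMod p) := by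
  have : Fact p.Prime := ⟨hp⟩
  intro hCI
  refine h fun S S' ⟨e, he⟩ => ?_
  have hequiv : Nonempty ((Fin (r + 3) → ZMod p) ≃ₗ[ZMod p]
      (((Fin r → ZMod p) × ZMod p) × (ZMod p × ZMod p))) :=
    FiniteDimensional.nonempty_linearEquiv_of_finrank_eq (by simp)
  obtain ⟨α, hα⟩ := exists_linearEquiv_of_isCIGroup
    (hCI.of_addEquiv hequiv.some.toAddEquiv) S S' (e.trans (Equiv.subRight (e 0))) (by simp)
    (fun x y => by simpa [cayleyRel] using he x y)
  exact ⟨α.toAddEquiv, hα⟩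
end

section
/- Let p be a prime and r a natural number. If there exists a subset S of the elementary abelian group (Z_p)^r with |S| < p^{r−1} such that Cay⃗((Z_p)^r; S) is not a DCI digraph, then (Z_p)^{r+2} is not a CI group. -/
/-- The subset of `V × ℤ_p²` whose layers are `V` over `0`, `S` over `(1, 0)`, `-S` over `-(1, 0)`,
`{0}` over `±(0, 1)` and `±(1, 1)`, and empty elsewhere. For `p = 2`, where `(1, 0) = -(1, 0)` and
`S = -S`, the two middle layers coincide consistently. -/
def liftSet {V : Type*} [AddCommGroup V] {p : ℕ} (S : Set V) : Set (V × ZMod p × ZMod p) :=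
  {x | x.2 = 0 ∨ (x.2 = (1, 0) ∧ x.1 ∈ S) ∨ (x.2 = -(1, 0) ∧ -x.1 ∈ S) ∨
    (x.1 = 0 ∧ (x.2 = (0, 1) ∨ x.2 = -(0, 1) ∨ x.2 = (1, 1) ∨ x.2 = -(1, 1)))}

section

variable {p : ℕ} [Fact p.Prime] {V : Type*} [AddCommGroup V]

lemma liftSet_neg (S : Set V) : (liftSet S : Set (V × ZMod p × ZMod p)) = -liftSet S := by
  ext ⟨v, a, b⟩
  simp only [liftSet, Set.mem_neg, Set.mem_ofPred_eq, Prod.fst_neg, Prod.snd_neg, neg_zero,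
    neg_eq_zero (a := v), neg_neg, neg_eq_iff_eq_neg (a := (a, b))]
  tauto

lemma digraphIso_liftSet {S S' : Set V} (h : DigraphIso (cayleyRel S) (cayleyRel S')) :
    DigraphIso (cayleyRel (liftSet S : Set (V × ZMod p × ZMod p)))
      (cayleyRel (liftSet S' : Set (V × ZMod p × ZMod p))) := by
  obtain ⟨e, he⟩ := h
  refine ⟨e.prodCongr (Equiv.refl _), fun ⟨v, a⟩ ⟨w, b⟩ => ?_⟩
  have h1 := he v w
  have h2 := he w v
  simp only [cayleyRel] at h1 h2
  simp [cayleyRel, liftSet, h1, h2, sub_eq_zero]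

lemma liftSet_fst (S : Set V) (x : V × ZMod p × ZMod p) (hx : x ∈ liftSet S) (h0 : x.2 ≠ 0)
    (h1 : x.2 ≠ (1, 0)) (h2 : x.2 ≠ -(1, 0)) : x.1 = 0 := by
  simp only [liftSet, Set.mem_ofPred_eq] at hx
  tauto

variable [Module (ZMod p) V]

lemma mem_liftSet_one (S : Set V) (v : V) :
    (v, ((1, 0) : ZMod p × ZMod p)) ∈ liftSet S ↔ v ∈ S := by
  simp only [liftSet, Set.mem_ofPred_eq]
  constructor
  · rintro (h | ⟨-, h⟩ | ⟨h, h'⟩ | ⟨-, h⟩)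
    · simp at h
    · exact h
    -- Here `1 = -1` in `ℤ_p`, so that negation on `V` is trivial.
    · have h1 : (1 : ZMod p) = -1 := by simpa using h
      have : v = -v := by
        calc v = (1 : ZMod p) • v := (one_smul _ v).symm
          _ = -v := by rw [h1, neg_smul, one_smul]
      rwa [this]
    · simp at h
  · intro h
    simp [h]

lemma mem_liftSet_neg_one (S : Set V) (v : V) :
    (v, (-(1, 0) : ZMod p × ZMod p)) ∈ liftSet S ↔ -v ∈ S := by
  rw [liftSet_neg, Set.mem_neg, Prod.neg_mk, neg_neg, mem_liftSet_one]

variable [Finite V]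

/-- The only subgroup of order `p ^ r` contained in `liftSet S'` is `V × 0`, when
`2 ≤ |S'| < p ^ (r - 1)`; the subgroup is given as the range of an injective homomorphism `φ`. -/
lemma snd_eq_zero {r : ℕ} (hV : Nat.card V = p ^ r) {S' : Set V} (h2 : 2 ≤ S'.ncard)
    (hS' : S'.ncard < p ^ (r - 1)) (φ : V →+ V × ZMod p × ZMod p)
    (hφ : Function.Injective φ) (hT : ∀ v, φ v ∈ liftSet S') (v : V) : (φ v).2 = 0 := by
  classical
  have hp : p.Prime := Fact.out
  have := Fintype.ofFinite V
  have hr : 2 ≤ r := by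
    by_contra hr
    have : r - 1 = 0 := by omega
    rw [this, pow_zero] at hS'
    omega
  by_contra hv
  by_cases hA : ∃ v, (φ v).2 ≠ 0 ∧ (φ v).2 ≠ (1, 0) ∧ (φ v).2 ≠ -(1, 0)
  -- The range meets a singleton layer, so it meets every layer in at most one point.
  · obtain ⟨w, hw0, hw1, hw2⟩ := hA
    have hker : ∀ k, (φ k).2 = 0 → k = 0 := by
      intro k hk
      have e1 := liftSet_fst S' _ (hT w) hw0 hw1 hw2
      have e3 : (φ (w + k)).2 = (φ w).2 := by rw [map_add, Prod.snd_add, hk, add_zero]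
      have e2 := liftSet_fst S' _ (hT (w + k)) (by rwa [e3]) (by rwa [e3]) (by rwa [e3])
      rw [map_add, Prod.fst_add, e1, zero_add] at e2
      exact hφ (by rw [map_zero]; exact Prod.ext e2 hk)
    let f : V →+ ZMod p × ZMod p := (AddMonoidHom.snd V (ZMod p × ZMod p)).comp φ
    have hf : Function.Injective f := (injective_iff_map_eq_zero f).2 hker
    have hcard : Nat.card (ZMod p × ZMod p) = p ^ 2 := by
      simp [sq]
    have hle : p ^ r ≤ p ^ 2 := by
      rw [← hV, ← hcard]
      exact Nat.card_le_card_of_injective f hf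
    have hr2 : r = 2 := le_antisymm ((Nat.pow_le_pow_iff_right hp.one_lt).1 hle) hr
    subst hr2
    have hbij : Function.Bijective f :=
      (Nat.bijective_iff_injective_and_card f).2 ⟨hf, by rw [hV, hcard]⟩
    obtain ⟨u, hu⟩ := hbij.2 (1, -1)
    have hu' : (φ u).2 = (1, -1) := hu
    have hpt : (-1 : ZMod p) = 1 := by
      have := hT u
      simp only [liftSet, Set.mem_ofPred_eq, hu', Prod.ext_iff] at this
      have h10 : (1 : ZMod p) ≠ 0 := one_ne_zero
      rcases this with h | h | h | ⟨-, h | h | h | h⟩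
      · exact absurd h.1 h10
      · exact absurd h.1.2 (by simp)
      · exact absurd h.1.2 (by simp)
      · exact absurd h.1 (by simp)
      · exact absurd h.1 (by simp)
      · exact h.2
      · exact h.1.symm
    have hp2 : p = 2 := by
      have h2 : ((2 : ℕ) : ZMod p) = 0 := by
        push_cast
        linear_combination -hpt
      exact (Nat.prime_dvd_prime_iff_eq hp Nat.prime_two).1 ((ZMod.natCast_eq_zero_iff 2 p).1 h2)
    subst hp2
    have : S'.ncard < 2 := hS'.trans_eq (by norm_num)
    omega
  -- The range lies over the line spanned by `(1, 0)`; each of its layers is a translate of the one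
  -- over `(1, 0)`, hence has at most `|S'|` points.
  · have hB : ∀ v, (φ v).2 = 0 ∨ (φ v).2 = (1, 0) ∨ (φ v).2 = -(1, 0) := by
      intro v
      by_contra h
      exact hA ⟨v, by tauto⟩
    obtain ⟨w, hw⟩ : ∃ w, (φ w).2 = (1, 0) := by
      rcases hB v with h | h | h
      · exact absurd h hv
      · exact ⟨v, h⟩
      · exact ⟨-v, by rw [map_neg, Prod.snd_neg, h, neg_neg]⟩
    have hfib : ∀ c ∈ (Finset.univ : Finset (ZMod p)),
        (Finset.univ.filter fun v : V => (φ v).2.1 = c).card ≤ S'.ncard := by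
      intro c _
      rcases (Finset.univ.filter fun v : V => (φ v).2.1 = c).eq_empty_or_nonempty with h | ⟨u, hu⟩
      · simp [h]
      have h0 : ∀ v, (φ v).2.2 = 0 := by
        intro v
        rcases hB v with h | h | h <;> simp [h]
      rw [← Set.ncard_coe_finset]
      simp only [Finset.mem_filter, Finset.mem_univ, true_and] at hu
      have key : ∀ v, (φ v).2.1 = c → (φ (v - u + w)).2 = (1, 0) := by
        intro v hv
        have := h0 v
        have := h0 u
        rw [map_add, map_sub, Prod.snd_add, Prod.snd_sub, hw]
        ext <;> simp [*]
      refine Set.ncard_le_ncard_of_injOn (fun v => (φ (v - u + w)).1) ?_ ?_ (Set.toFinite _)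
      · intro v hv
        have hv' : (φ v).2.1 = c := by simpa using hv
        have hm := hT (v - u + w)
        rw [← Prod.mk.eta (p := φ (v - u + w)), key v hv', mem_liftSet_one] at hm
        exact hm
      · intro v hv v' hv' hvv
        have e1 : (φ v).2.1 = c := by simpa using hv
        have e2 : (φ v').2.1 = c := by simpa using hv'
        have := hφ (Prod.ext hvv ((key v e1).trans (key v' e2).symm))
        simpa using this
    have hle := Finset.card_le_mul_card_image_of_maps_to
      (s := (Finset.univ : Finset V)) (fun _ _ => Finset.mem_univ _) _ hfib
    rw [Finset.card_univ, Finset.card_univ, ZMod.card, ← Nat.card_eq_fintype_card, hV] at hle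
    have : p ^ r = p ^ (r - 1) * p := by
      rw [← pow_succ]
      congr 1
      omega
    rw [this] at hle
    exact absurd (Nat.le_of_mul_le_mul_right hle hp.pos) (not_le.2 hS')

/-- An automorphism of `V × ℤ_p²` taking `liftSet S` to `liftSet S'` yields one of `V` taking `S`
to `S'`. -/
lemma descend {r : ℕ} (hV : Nat.card V = p ^ r) {S S' : Set V} (h2 : 2 ≤ S.ncard)
    (hSS : S.ncard = S'.ncard) (hS : S.ncard < p ^ (r - 1))
    (α : V × ZMod p × ZMod p ≃+ V × ZMod p × ZMod p) (hα : α '' liftSet S = liftSet S') :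
    ∃ β : V ≃+ V, β '' S = S' := by
  have hmem : ∀ x, x ∈ liftSet S ↔ α x ∈ liftSet S' := fun x => by
    rw [← hα, α.injective.mem_set_image]
  have hz : ∀ v, (α (v, 0)).2 = 0 := by
    refine snd_eq_zero hV (hSS ▸ h2) (hSS ▸ hS)
      (α.toAddMonoidHom.comp (AddMonoidHom.inl V (ZMod p × ZMod p))) ?_ ?_
    · intro a b hab
      simpa using hab
    · intro v
      exact (hmem (v, 0)).1 (by simp [liftSet])
  let β₀ : V →+ V := (AddMonoidHom.fst V (ZMod p × ZMod p)).comp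
    (α.toAddMonoidHom.comp (AddMonoidHom.inl V (ZMod p × ZMod p)))
  have hβ : ∀ v, α (v, 0) = (β₀ v, 0) := fun v => Prod.ext rfl (hz v)
  have hinj : Function.Injective β₀ := by
    intro a b hab
    have : α (a, 0) = α (b, 0) := by rw [hβ, hβ, hab]
    simpa using this
  have hbij : Function.Bijective β₀ := Finite.injective_iff_bijective.1 hinj
  let β : V ≃+ V := AddEquiv.ofBijective β₀ hbij
  -- As `α` maps the finite group `V × 0` onto itself, no other point is mapped into it.
  have hz' : ∀ x, (α x).2 = 0 → x.2 = 0 := by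
    intro x hx
    obtain ⟨v, hv⟩ := hbij.2 (α x).1
    have : α (v, 0) = α x := by rw [hβ, hv]; exact Prod.ext rfl hx.symm
    rw [← α.injective this]
  have hsplit : ∀ v u, α (v, u) = (β v + (α (0, u)).1, (α (0, u)).2) := by
    intro v u
    have : (v, u) = (v, 0) + ((0 : V), u) := by simp
    rw [this, map_add, hβ]
    ext <;> simp [β]
  set A := α (0, (1, 0)) with hA
  have hA0 : A.2 ≠ 0 := fun h => by simpa using hz' _ h
  have hAS : ∀ v, v ∈ S ↔ (β v + A.1, A.2) ∈ liftSet S' := by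
    intro v
    rw [← mem_liftSet_one (p := p) S v, hmem, hsplit]
  -- The layer over `(1, 0)` cannot go to a singleton layer, as `S` has two distinct elements.
  have hA1 : A.2 = (1, 0) ∨ A.2 = -(1, 0) := by
    by_contra hcon
    push Not at hcon
    obtain ⟨s, hs, t, ht, hst⟩ := (Set.one_lt_ncard (Set.toFinite S)).1 h2
    have e1 := liftSet_fst S' _ ((hAS s).1 hs) hA0 hcon.1 hcon.2
    have e2 := liftSet_fst S' _ ((hAS t).1 ht) hA0 hcon.1 hcon.2
    exact hst (β.injective (add_right_cancel (e1.trans e2.symm)))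
  -- Distinct layers have distinct images, also up to sign, so that the singletons over `(0, 1)` and
  -- `(1, 1)` avoid the layers `±(1, 0)`.
  have hother : ∀ c : ZMod p, ((0 : V), (c, (1 : ZMod p))) ∈ liftSet S →
      (α (0, (c, 1))).1 = 0 := by
    intro c hc
    have hne : ∀ d : ZMod p, (α (0, (d, 1))).2 ≠ 0 := fun d h => by simpa using hz' _ h
    have hplus : (α (0, (c, 1))).2 ≠ A.2 := by
      intro h
      apply hne (c - 1)
      have : ((0 : V), (c - 1, (1 : ZMod p))) = (0, (c, 1)) - (0, (1, 0)) := by simp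
      rw [this, map_sub, Prod.snd_sub, h, sub_self]
    have hminus : (α (0, (c, 1))).2 ≠ -A.2 := by
      intro h
      apply hne (c + 1)
      have : ((0 : V), (c + 1, (1 : ZMod p))) = (0, (c, 1)) + (0, (1, 0)) := by simp
      rw [this, map_add, Prod.snd_add, h, neg_add_cancel]
    refine liftSet_fst S' _ ((hmem _).1 hc) (hne c) ?_ ?_
    · rcases hA1 with h | h
      · rwa [h] at hplus
      · rwa [h, neg_neg] at hminus
    · rcases hA1 with h | h
      · rwa [h] at hminus
      · rwa [h] at hplus
  have hAfst : A.1 = 0 := by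
    have : ((0 : V), ((1 : ZMod p), (0 : ZMod p))) = (0, (1, 1)) - (0, (0, 1)) := by simp
    rw [hA, this, map_sub, Prod.fst_sub, hother 1 (by simp [liftSet]),
      hother 0 (by simp [liftSet]), sub_zero]
  simp only [hAfst, add_zero] at hAS
  rcases hA1 with h | h
  · simp only [h, mem_liftSet_one] at hAS
    refine ⟨β, ?_⟩
    ext w
    obtain ⟨v, rfl⟩ := β.surjective w
    rw [β.injective.mem_set_image, hAS]
  · simp only [h, mem_liftSet_neg_one] at hAS
    refine ⟨β.trans (AddEquiv.neg V), ?_⟩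
    ext w
    obtain ⟨v, rfl⟩ := (β.trans (AddEquiv.neg V)).surjective w
    rw [(β.trans (AddEquiv.neg V)).injective.mem_set_image, hAS]
    rfl

end

section

variable {G H : Type*} [AddCommGroup G] [AddCommGroup H]

lemma IsCIGroup.of_addEquiv_s2 (f : G ≃+ H) (hG : IsCIGroup G) : IsCIGroup H := by
  intro S hS S' hS' ⟨e, he⟩
  have hsymm : ∀ T : Set H, T = -T → f ⁻¹' T = -(f ⁻¹' T) := by
    intro T hT
    ext x
    rw [Set.mem_neg, Set.mem_preimage, Set.mem_preimage, map_neg, ← Set.mem_neg, ← hT]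
  obtain ⟨α, hα⟩ := hG (f ⁻¹' S) (hsymm S hS) (f ⁻¹' S') (hsymm S' hS')
    ⟨f.toEquiv.trans (e.trans f.symm.toEquiv), fun x y => by
      simpa [cayleyRel] using he (f x) (f y)⟩
  refine ⟨(f.symm.trans α).trans f, ?_⟩
  have : (f.symm.trans α).trans f '' S = f '' (α '' (f ⁻¹' S)) := by
    ext x
    simp only [Set.mem_image, Set.mem_preimage]
    constructor
    · rintro ⟨y, hy, rfl⟩
      exact ⟨_, ⟨f.symm y, by simpa using hy, rfl⟩, rfl⟩
    · rintro ⟨_, ⟨y, hy, rfl⟩, rfl⟩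
      exact ⟨f y, hy, by simp⟩
  rw [this, hα, Set.image_preimage_eq _ f.surjective]

lemma ncard_eq_of_digraphIso {S S' : Set G}
    (h : DigraphIso (cayleyRel S) (cayleyRel S')) : S.ncard = S'.ncard := by
  obtain ⟨e, he⟩ := h
  -- `S` is the out-neighbourhood of `0`, and `S'` that of `e 0` translated by `-e 0`.
  have : (fun x => e x - e 0) '' S = S' := by
    ext y
    constructor
    · rintro ⟨x, hx, rfl⟩
      exact (he 0 x).1 (by simpa [cayleyRel] using hx)
    · intro hy
      refine ⟨e.symm (y + e 0), ?_, by simp⟩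
      have := (he 0 (e.symm (y + e 0))).2 (by simpa [cayleyRel] using hy)
      simpa [cayleyRel] using this
  rw [← this, Set.ncard_image_of_injective]
  intro a b hab
  exact e.injective (sub_left_injective hab)

/-- The additive automorphisms of a vector space act transitively on its nonzero vectors. -/
lemma exists_addEquiv_apply_eq (K : Type*) {V : Type*} [Field K] [AddCommGroup V]
    [Module K V] {x y : V} (hx : x ≠ 0) (hy : y ≠ 0) : ∃ β : V ≃+ V, β x = y := by
  obtain ⟨g, hg⟩ := Submodule.exists_linearEquiv_restrict_eq
    ((LinearEquiv.toSpanNonzeroSingleton K V x hx).symm.trans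
      (LinearEquiv.toSpanNonzeroSingleton K V y hy))
  refine ⟨g.toAddEquiv, ?_⟩
  have := hg (LinearEquiv.toSpanNonzeroSingleton K V x hx 1)
  rw [LinearEquiv.trans_apply, LinearEquiv.symm_apply_apply] at this
  simpa using this.symm

lemma isDCIDigraph_of_ncard_le_one (K : Type*) {V : Type*} [Field K] [AddCommGroup V]
    [Module K V] [Finite V] {S : Set V} (hS : S.ncard ≤ 1) : IsDCIDigraph S := by
  intro S' hiso
  have hcard := ncard_eq_of_digraphIso hiso
  obtain ⟨e, he⟩ := hiso
  rcases Nat.le_one_iff_eq_zero_or_eq_one.1 hS with h | h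
  · rw [h] at hcard
    rw [Set.ncard_eq_zero] at h
    rw [eq_comm, Set.ncard_eq_zero] at hcard
    exact ⟨AddEquiv.refl V, by simp [h, hcard]⟩
  · rw [h] at hcard
    obtain ⟨s, rfl⟩ := Set.ncard_eq_one.1 h
    obtain ⟨s', rfl⟩ := Set.ncard_eq_one.1 hcard.symm
    -- `s = 0` exactly when the digraphs have loops.
    have h0 : s = 0 ↔ s' = 0 := by
      have := he 0 0
      simpa [cayleyRel, eq_comm] using this
    by_cases hs : s = 0
    · exact ⟨AddEquiv.refl V, by simp [hs, h0.1 hs]⟩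
    · obtain ⟨β, hβ⟩ := exists_addEquiv_apply_eq K hs (fun h => hs (h0.2 h))
      exact ⟨β, by simp [hβ]⟩

end

/-- If there is a subset `S` of `(ℤ_p)^r` with `|S| < p^(r-1)` such that
`Cay⃗((ℤ_p)^r; S)` is not a DCI digraph, then `(ℤ_p)^(r+2)` is not a CI group. -/
theorem nonDCI_smallValency_implies_nonCI_rplus2 (p : ℕ) (hp : p.Prime) (r : ℕ)
    (S : Set (Fin r → ZMod p)) (hcard : S.ncard < p ^ (r - 1))
    (h : ¬ IsDCIDigraph S) :
    ¬ IsCIGroup (Fin (r + 2) → ZMod p) := by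
  have := Fact.mk hp
  intro hCI
  have hS2 : 2 ≤ S.ncard := by
    by_contra hlt
    exact h (isDCIDigraph_of_ncard_le_one (ZMod p) (by omega))
  have f : (Fin (r + 2) → ZMod p) ≃+ (Fin r → ZMod p) × ZMod p × ZMod p :=
    (((LinearEquiv.funCongrLeft (ZMod p) (ZMod p) finSumFinEquiv).trans
      (LinearEquiv.sumArrowLequivProdArrow (Fin r) (Fin 2) (ZMod p) (ZMod p))).trans
      ((LinearEquiv.refl _ _).prodCongr (LinearEquiv.finTwoArrow (ZMod p) (ZMod p)))).toAddEquiv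
  have hCI' := hCI.of_addEquiv_s2 f
  refine h fun S' hiso => ?_
  obtain ⟨α, hα⟩ := hCI' (liftSet S) (liftSet_neg S) (liftSet S') (liftSet_neg S')
    (digraphIso_liftSet hiso)
  exact descend (by simp) hS2 (ncard_eq_of_digraphIso hiso) hcard α hα
end

section
/- The elementary abelian group (Z_3)^10 is not a CI group: there exist symmetric subsets S₁ and S₂ of (Z_3)^10 such that the Cayley graphs Cay((Z_3)^10; S₁) and Cay((Z_3)^10; S₂) are isomorphic, but no group automorphism of (Z_3)^10 carries S₁ to S₂. -/
/-- The value `Φ d w` for `d = (a, b, c)` and `w` with coordinates `w₁, …, w₅` dual to the monomials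
`x²y, xy², x²z, y²z, xyz`. -/
def directionalForm (a b c w₁ w₂ w₃ w₄ w₅ : ZMod 3) : ZMod 3 :=
  c ^ 2 * (b * w₁ + a * w₂) - c * (b ^ 2 * w₃ + a ^ 2 * w₄) - a * b * c * w₅

/-- `directionalForm` on `(ℤ_3)^10`: coordinates `0, 1, 2` are the direction `d`, coordinates
`3, …, 7` are `w`, and coordinates `8, 9` are ignored. -/
def formAt (g : Fin 10 → ZMod 3) : ZMod 3 :=
  directionalForm (g 0) (g 1) (g 2) (g 3) (g 4) (g 5) (g 6) (g 7)

/-- The first connection set: `d ≠ 0` and `Φ d w = 0`. -/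
def linearSet : Set (Fin 10 → ZMod 3) :=
  {g | ¬ (g 0 = 0 ∧ g 1 = 0 ∧ g 2 = 0) ∧ formAt g = 0}

/-- The second connection set: `d ≠ 0` and `Φ d w = -(d₀ d₁ d₂)²`, which is `Φ d (f d)`. -/
def twistedSet : Set (Fin 10 → ZMod 3) :=
  {g | ¬ (g 0 = 0 ∧ g 1 = 0 ∧ g 2 = 0) ∧ formAt g = -(g 0 * g 1 * g 2) ^ 2}

/-- The cubic map `f`, read as a map from `(ℤ_3)^10` to itself that depends only on `d` and takes
values in `W`. -/
def cubicMap (g : Fin 10 → ZMod 3) : Fin 10 → ZMod 3 :=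
  ![0, 0, 0, g 0 ^ 2 * g 1, g 0 * g 1 ^ 2, g 0 ^ 2 * g 2, g 1 ^ 2 * g 2, g 0 * g 1 * g 2, 0, 0]

lemma linearSet_symm : linearSet = -linearSet := by
  ext g
  have h : formAt (-g) = formAt g * (-1) ^ 4 := by
    simp only [formAt, directionalForm, Pi.neg_apply]; ring
  simp [linearSet, h]

lemma twistedSet_symm : twistedSet = -twistedSet := by
  ext g
  have h : formAt (-g) = formAt g := by
    simp only [formAt, directionalForm, Pi.neg_apply]; ring
  have h' : (-g 0 * -g 1 * -g 2) ^ 2 = (g 0 * g 1 * g 2) ^ 2 := by ring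
  simp only [twistedSet, Set.mem_neg, Set.mem_ofPred_eq, h, Pi.neg_apply,
    neg_eq_zero, h']

set_option maxRecDepth 100000 in
/-- The increment of `f` in direction `d = (a, b, c)` is seen by `Φ d` as a quantity independent of
the base point `(x, y, z)`. This uses `t ^ 3 = t` in `ℤ_3` and is checked point by point. -/
lemma directionalForm_increment : ∀ a b c x y z : ZMod 3,
    directionalForm a b c
      ((x + a) ^ 2 * (y + b) - x ^ 2 * y) ((x + a) * (y + b) ^ 2 - x * y ^ 2)
      ((x + a) ^ 2 * (z + c) - x ^ 2 * z) ((y + b) ^ 2 * (z + c) - y ^ 2 * z)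
      ((x + a) * (y + b) * (z + c) - x * y * z) = -(a * b * c) ^ 2 := by
  unfold directionalForm
  decide

lemma formAt_shear (g h : Fin 10 → ZMod 3) :
    formAt ((h + cubicMap h) - (g + cubicMap g)) =
      formAt (h - g) - ((h - g) 0 * (h - g) 1 * (h - g) 2) ^ 2 := by
  have key := directionalForm_increment (h 0 - g 0) (h 1 - g 1) (h 2 - g 2) (g 0) (g 1) (g 2)
  simp only [add_sub_cancel, directionalForm] at key
  have h0 : ∀ g, cubicMap g 0 = 0 := fun _ => rfl
  have h1 : ∀ g, cubicMap g 1 = 0 := fun _ => rfl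
  have h2 : ∀ g, cubicMap g 2 = 0 := fun _ => rfl
  have h3 : ∀ g, cubicMap g 3 = g 0 ^ 2 * g 1 := fun _ => rfl
  have h4 : ∀ g, cubicMap g 4 = g 0 * g 1 ^ 2 := fun _ => rfl
  have h5 : ∀ g, cubicMap g 5 = g 0 ^ 2 * g 2 := fun _ => rfl
  have h6 : ∀ g, cubicMap g 6 = g 1 ^ 2 * g 2 := fun _ => rfl
  have h7 : ∀ g, cubicMap g 7 = g 0 * g 1 * g 2 := fun _ => rfl
  simp only [formAt, directionalForm, Pi.add_apply, Pi.sub_apply, h0, h1, h2, h3, h4, h5, h6, h7]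
  linear_combination key

/-- The shear `g ↦ g + f g`; it is bijective because `f` depends only on coordinates which the shear
leaves fixed. -/
def shear : (Fin 10 → ZMod 3) ≃ (Fin 10 → ZMod 3) where
  toFun g := g + cubicMap g
  invFun g := g - cubicMap g
  left_inv g := by
    have h : cubicMap (g + cubicMap g) = cubicMap g := by simp [cubicMap]
    simp [h]
  right_inv g := by
    have h : cubicMap (g - cubicMap g) = cubicMap g := by simp [cubicMap]
    simp [h]

lemma digraphIso_shear : DigraphIso (cayleyRel linearSet) (cayleyRel twistedSet) := by
  refine ⟨shear, fun g h => ?_⟩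
  have h0 : ∀ g, cubicMap g 0 = 0 := fun _ => rfl
  have h1 : ∀ g, cubicMap g 1 = 0 := fun _ => rfl
  have h2 : ∀ g, cubicMap g 2 = 0 := fun _ => rfl
  change h - g ∈ linearSet ↔ (h + cubicMap h) - (g + cubicMap g) ∈ twistedSet
  simp only [linearSet, twistedSet, Set.mem_ofPred_eq, formAt_shear]
  simp only [Pi.add_apply, Pi.sub_apply, h0, h1, h2, add_zero]
  rw [sub_eq_add_neg (formAt _), add_eq_right]

/-- The space `U` of directions. -/
abbrev Direction := ZMod 3 × ZMod 3 × ZMod 3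

lemma Direction.map_eq (l : Direction →+ ZMod 3) (d : Direction) :
    l d = d.1 * l (1, 0, 0) + d.2.1 * l (0, 1, 0) + d.2.2 * l (0, 0, 1) := by
  have hs : ∀ (t : ZMod 3) (v : Direction), l (t • v) = t * l v := fun t v => by
    rw [ZMod.map_smul, smul_eq_mul]
  rw [← hs, ← hs, ← hs, ← map_add, ← map_add]
  congr 1
  ext <;> simp

set_option maxRecDepth 100000 in
/-- Sums over `U` of each coefficient of `Φ d` times a linear form in `d` vanish, since none of the
monomials involved is divisible by `d₀² d₁² d₂²`. -/
lemma sum_coeff_mul_linear : ∀ r s t : ZMod 3,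
    ∑ d : Direction, d.2.2 ^ 2 * d.2.1 * (d.1 * r + d.2.1 * s + d.2.2 * t) = 0 ∧
    ∑ d : Direction, d.2.2 ^ 2 * d.1 * (d.1 * r + d.2.1 * s + d.2.2 * t) = 0 ∧
    ∑ d : Direction, d.2.2 * d.2.1 ^ 2 * (d.1 * r + d.2.1 * s + d.2.2 * t) = 0 ∧
    ∑ d : Direction, d.2.2 * d.1 ^ 2 * (d.1 * r + d.2.1 * s + d.2.2 * t) = 0 ∧
    ∑ d : Direction, d.1 * d.2.1 * d.2.2 * (d.1 * r + d.2.1 * s + d.2.2 * t) = 0 := by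
  decide

/-- No linear map `L = (l₁, …, l₅) : U → W` satisfies `Φ d (L d) = Φ d (f d)` for every `d`. -/
lemma no_linear_solution (l₁ l₂ l₃ l₄ l₅ : Direction →+ ZMod 3)
    (h : ∀ d : Direction, directionalForm d.1 d.2.1 d.2.2 (l₁ d) (l₂ d) (l₃ d) (l₄ d) (l₅ d) =
      -(d.1 * d.2.1 * d.2.2) ^ 2) : False := by
  have hsum : ∑ d : Direction, -(d.1 * d.2.1 * d.2.2) ^ 2 = 1 := by decide
  have s₁ := (sum_coeff_mul_linear (l₁ (1, 0, 0)) (l₁ (0, 1, 0)) (l₁ (0, 0, 1))).1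
  have s₂ := (sum_coeff_mul_linear (l₂ (1, 0, 0)) (l₂ (0, 1, 0)) (l₂ (0, 0, 1))).2.1
  have s₃ := (sum_coeff_mul_linear (l₃ (1, 0, 0)) (l₃ (0, 1, 0)) (l₃ (0, 0, 1))).2.2.1
  have s₄ := (sum_coeff_mul_linear (l₄ (1, 0, 0)) (l₄ (0, 1, 0)) (l₄ (0, 0, 1))).2.2.2.1
  have s₅ := (sum_coeff_mul_linear (l₅ (1, 0, 0)) (l₅ (0, 1, 0)) (l₅ (0, 0, 1))).2.2.2.2
  simp only [← Direction.map_eq] at s₁ s₂ s₃ s₄ s₅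
  have hzero : ∑ d : Direction,
      directionalForm d.1 d.2.1 d.2.2 (l₁ d) (l₂ d) (l₃ d) (l₄ d) (l₅ d) =
      (∑ d : Direction, d.2.2 ^ 2 * d.2.1 * l₁ d) + (∑ d : Direction, d.2.2 ^ 2 * d.1 * l₂ d)
      - (∑ d : Direction, d.2.2 * d.2.1 ^ 2 * l₃ d) - (∑ d : Direction, d.2.2 * d.1 ^ 2 * l₄ d)
      - ∑ d : Direction, d.1 * d.2.1 * d.2.2 * l₅ d := by
    simp only [← Finset.sum_add_distrib, ← Finset.sum_sub_distrib]
    refine Finset.sum_congr rfl fun d _ => ?_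
    unfold directionalForm
    ring
  rw [s₁, s₂, s₃, s₄, s₅, Finset.sum_congr rfl fun d _ => h d, hsum] at hzero
  revert hzero
  decide

/-- The inclusion of `U` into `(ℤ_3)^10` as the first three coordinates. -/
def inclusion : Direction →+ (Fin 10 → ZMod 3) where
  toFun d := ![d.1, d.2.1, d.2.2, 0, 0, 0, 0, 0, 0, 0]
  map_zero' := by ext i; fin_cases i <;> rfl
  map_add' d d' := by ext i; fin_cases i <;> simp

/-- The projection of `(ℤ_3)^10` onto `U`. -/
def projection : (Fin 10 → ZMod 3) →+ Direction where
  toFun g := (g 0, g 1, g 2)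
  map_zero' := rfl
  map_add' _ _ := rfl

lemma not_image_linearSet :
    ¬ ∃ α : (Fin 10 → ZMod 3) ≃+ (Fin 10 → ZMod 3), α '' linearSet = twistedSet := by
  rintro ⟨α, hα⟩
  have hmem : ∀ d : Direction, d ≠ 0 → α (inclusion d) ∈ twistedSet := by
    intro d hd
    rw [← hα]
    refine ⟨_, ⟨fun h0 => hd ?_, ?_⟩, rfl⟩
    · exact Prod.ext h0.1 (Prod.ext h0.2.1 h0.2.2)
    · simp [formAt, directionalForm, inclusion]
  let A : Direction →+ Direction :=
    (projection.comp α.toAddMonoidHom).comp inclusion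
  have hA : ∀ d, A d = projection (α (inclusion d)) := fun _ => rfl
  -- `α (U × 0)` meets `W` only in `0` because every element of `twistedSet` has `d ≠ 0`.
  have hinj : Function.Injective A := by
    rw [injective_iff_map_eq_zero]
    intro d hd
    by_contra hne
    rw [hA] at hd
    exact (hmem d hne).1
      ⟨congrArg Prod.fst hd, congrArg (fun p => p.2.1) hd, congrArg (fun p => p.2.2) hd⟩
  let E : Direction ≃+ Direction :=
    AddEquiv.ofBijective A (Finite.injective_iff_bijective.mp hinj)
  let l (i : Fin 10) : Direction →+ ZMod 3 :=
    (((Pi.evalAddMonoidHom (fun _ : Fin 10 => ZMod 3) i).comp α.toAddMonoidHom).comp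
      inclusion).comp E.symm.toAddMonoidHom
  refine no_linear_solution (l 3) (l 4) (l 5) (l 6) (l 7) fun d => ?_
  obtain ⟨d', rfl⟩ := E.surjective d
  have hl : ∀ i, l i (E d') = α (inclusion d') i := by
    intro i
    change α (inclusion (E.symm (E d'))) i = _
    rw [E.symm_apply_apply]
  simp only [hl]
  change formAt (α (inclusion d')) =
    -(α (inclusion d') 0 * α (inclusion d') 1 * α (inclusion d') 2) ^ 2
  by_cases hd : d' = 0
  · simp [hd, formAt, directionalForm]
  · exact (hmem d' hd).2

/-- `(ℤ_3)^10` is not a CI group: there are symmetric subsets `S₁`, `S₂` of `(ℤ_3)^10`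
whose Cayley graphs are isomorphic, but no group automorphism of `(ℤ_3)^10` carries
`S₁` to `S₂`. -/
theorem Z3_pow10_not_CI :
    ¬ IsCIGroup (Fin 10 → ZMod 3) ∧
    ∃ S₁ S₂ : Set (Fin 10 → ZMod 3), S₁ = -S₁ ∧ S₂ = -S₂ ∧
      DigraphIso (cayleyRel S₁) (cayleyRel S₂) ∧
      ¬ ∃ α : (Fin 10 → ZMod 3) ≃+ (Fin 10 → ZMod 3), α '' S₁ = S₂ := by
  exact ⟨fun hCI => not_image_linearSet
      (hCI linearSet linearSet_symm twistedSet twistedSet_symm digraphIso_shear),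
    linearSet, twistedSet, linearSet_symm, twistedSet_symm, digraphIso_shear, not_image_linearSet⟩
end

section
/- Let {w₁, w₂, w₃, v₁, v₂, v₃, v₄, v₅} be the standard basis of (Z_3)^8 (viewed as a vector space over Z_3), and let S be the union of the eleven sets S_{i,j,k} listed in the context. Then Cay⃗((Z_3)^8; S) is not a DCI digraph; in particular, (Z_3)^8 is not a DCI group. -/
namespace Spiga

/-- The standard basis of `(ℤ_3)^8`. -/
def e (i : Fin 8) : Fin 8 → ZMod 3 := Pi.single i 1

def w1 : Fin 8 → ZMod 3 := e 0
def w2 : Fin 8 → ZMod 3 := e 1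
def w3 : Fin 8 → ZMod 3 := e 2
def v1 : Fin 8 → ZMod 3 := e 3
def v2 : Fin 8 → ZMod 3 := e 4
def v3 : Fin 8 → ZMod 3 := e 5
def v4 : Fin 8 → ZMod 3 := e 6
def v5 : Fin 8 → ZMod 3 := e 7

def S000 : Set (Fin 8 → ZMod 3) := {v1, v3, v4, v5}
def S100 : Set (Fin 8 → ZMod 3) :=
  {x | ∃ a b c : ZMod 3, x = w1 + a • v1 + b • v2 + c • v5}
def S010 : Set (Fin 8 → ZMod 3) :=
  {x | ∃ a b c d : ZMod 3, x = w2 + a • v1 + b • v3 + c • v4 + d • v5}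
def S001 : Set (Fin 8 → ZMod 3) :=
  {x | ∃ a b c d : ZMod 3, x = w3 + a • v2 + b • v3 + c • v4 + d • v5}
def S110 : Set (Fin 8 → ZMod 3) :=
  {x | ∃ a b c d : ZMod 3, x = w1 + w2 + a • v1 + b • v2 + c • v3 + b • v4 + d • v5}
def S101 : Set (Fin 8 → ZMod 3) :=
  {x | ∃ a b c d : ZMod 3, x = w1 + w3 + a • v1 + b • v2 + a • v3 + c • v4 + d • v5}
def S011 : Set (Fin 8 → ZMod 3) :=
  {x | ∃ a b c d : ZMod 3,
    x = w2 + w3 + a • v1 + b • v2 + c • v3 + d • v4 - (a + b) • v5}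
def S111 : Set (Fin 8 → ZMod 3) :=
  {x | ∃ a b c d : ZMod 3,
    x = w1 + w2 + w3 + a • v1 + b • v2 + c • v3 + d • v4 + (-a - b + c + d) • v5}
def S211 : Set (Fin 8 → ZMod 3) :=
  {x | ∃ a b c d : ZMod 3,
    x = (2 : ZMod 3) • w1 + w2 + w3 + a • v1 + b • v2 + c • v3 + d • v4
      - (a + b + c + d) • v5}
def S121 : Set (Fin 8 → ZMod 3) :=
  {x | ∃ a b c d : ZMod 3,
    x = w1 + (2 : ZMod 3) • w2 + w3 + a • v1 + b • v2 + c • v3 + d • v4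
      + (a + b - c + d) • v5}
def S112 : Set (Fin 8 → ZMod 3) :=
  {x | ∃ a b c d : ZMod 3,
    x = w1 + w2 + (2 : ZMod 3) • w3 + a • v1 + b • v2 + c • v3 + d • v4
      + (a + b + c - d) • v5}

/-- The connection set of Spiga's non-DCI Cayley digraph of `(ℤ_3)^8`. -/
def S : Set (Fin 8 → ZMod 3) :=
  S000 ∪ S100 ∪ S010 ∪ S001 ∪ S110 ∪ S101 ∪ S011 ∪ S111 ∪ S211 ∪ S121 ∪ S112

end Spiga

namespace Spiga

/-! ### The connection set as a union of cosets -/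

/-- The group `(ℤ_3)^8`. -/
abbrev G := Fin 8 → ZMod 3
/-- The quotient of `G` by `⟨v₁, …, v₅⟩`, with coordinates along `w₁, w₂, w₃`. -/
abbrev W := ZMod 3 × ZMod 3 × ZMod 3

/-- The projection of `G` onto the coordinates along `w₁, w₂, w₃`. -/
def pr : G →ₗ[ZMod 3] W :=
  (LinearMap.proj 0).prod ((LinearMap.proj 1).prod (LinearMap.proj 2))

lemma pr_apply (x : G) : pr x = (x 0, x 1, x 2) := rfl

/-- The indices `(i, j, k) ≠ 0` of the sets `S_{i,j,k}`: the nonzero points of `W` over which the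
connection set has elements. -/
def pts : List W :=
  [(1, 0, 0), (0, 1, 0), (0, 0, 1), (1, 1, 0), (1, 0, 1), (0, 1, 1),
    (1, 1, 1), (2, 1, 1), (1, 2, 1), (1, 1, 2)]

/-- Coefficient vector of a linear functional vanishing on the direction space of the coset
`S_h`, for `h ∈ pts`. It spans the annihilator within the dual of `ker pr`, except for
`h = (1, 0, 0)`, where `cf'` supplies a second functional. The value is `0` off `pts`. -/
def cf (h : W) : G :=
  if h = (1, 0, 0) then ![0, 0, 0, 0, 0, 1, 0, 0]
  else if h = (0, 1, 0) then ![0, 0, 0, 0, 1, 0, 0, 0]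
  else if h = (0, 0, 1) then ![0, 0, 0, 1, 0, 0, 0, 0]
  else if h = (1, 1, 0) then ![0, 0, 0, 0, 1, 0, -1, 0]
  else if h = (1, 0, 1) then ![0, 0, 0, 1, 0, -1, 0, 0]
  else if h = (0, 1, 1) then ![0, 0, 0, 1, 1, 0, 0, 1]
  else if h = (1, 1, 1) then ![0, 0, 0, 1, 1, -1, -1, 1]
  else if h = (2, 1, 1) then ![0, 0, 0, 1, 1, 1, 1, 1]
  else if h = (1, 2, 1) then ![0, 0, 0, -1, -1, 1, -1, 1]
  else if h = (1, 1, 2) then ![0, 0, 0, -1, -1, -1, 1, 1]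
  else 0

/-- The second functional vanishing on the direction space of `S_{1,0,0}`, which has codimension
`2` in `ker pr`; it is `0` for the other cosets. -/
def cf' (h : W) : G :=
  if h = (1, 0, 0) then ![0, 0, 0, 0, 0, 0, 1, 0] else 0

lemma cf_values :
    cf (1, 0, 0) = ![0, 0, 0, 0, 0, 1, 0, 0] ∧
    cf (0, 1, 0) = ![0, 0, 0, 0, 1, 0, 0, 0] ∧
    cf (0, 0, 1) = ![0, 0, 0, 1, 0, 0, 0, 0] ∧
    cf (1, 1, 0) = ![0, 0, 0, 0, 1, 0, -1, 0] ∧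
    cf (1, 0, 1) = ![0, 0, 0, 1, 0, -1, 0, 0] ∧
    cf (0, 1, 1) = ![0, 0, 0, 1, 1, 0, 0, 1] ∧
    cf (1, 1, 1) = ![0, 0, 0, 1, 1, -1, -1, 1] ∧
    cf (2, 1, 1) = ![0, 0, 0, 1, 1, 1, 1, 1] ∧
    cf (1, 2, 1) = ![0, 0, 0, -1, -1, 1, -1, 1] ∧
    cf (1, 1, 2) = ![0, 0, 0, -1, -1, -1, 1, 1] := by
  refine ⟨?_, ?_, ?_, ?_, ?_, ?_, ?_, ?_, ?_, ?_⟩ <;> rfl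

lemma cf'_values :
    cf' (1, 0, 0) = ![0, 0, 0, 0, 0, 0, 1, 0] ∧
    cf' (0, 1, 0) = 0 ∧
    cf' (0, 0, 1) = 0 ∧
    cf' (1, 1, 0) = 0 ∧
    cf' (1, 0, 1) = 0 ∧
    cf' (0, 1, 1) = 0 ∧
    cf' (1, 1, 1) = 0 ∧
    cf' (2, 1, 1) = 0 ∧
    cf' (1, 2, 1) = 0 ∧
    cf' (1, 1, 2) = 0 := by
  refine ⟨?_, ?_, ?_, ?_, ?_, ?_, ?_, ?_, ?_, ?_⟩ <;> rfl

/-- The amount by which the coset over `h` is moved, as measured by `cf h`, between the two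
connection sets `T 0` and `T 1`. -/
def shift (h : W) : ZMod 3 :=
  if h = (1, 1, 1) then 1
  else if h = (2, 1, 1) ∨ h = (1, 2, 1) ∨ h = (1, 1, 2) then -1 else 0

/-- The connection set obtained from `S` by translating the coset over each `h ∈ pts` so that
`cf h` takes the value `t * shift h` on it. So `T 0 = S`, and `T 1` is the set not equivalent
to it. -/
def T (t : ZMod 3) : Set G :=
  {x | x ∈ S000 ∨ (pr x ∈ pts ∧ cf (pr x) ⬝ᵥ x = t * shift (pr x) ∧ cf' (pr x) ⬝ᵥ x = 0)}

lemma mem_S000 {x : G} : x ∈ S000 ↔ x = e 3 ∨ x = e 5 ∨ x = e 6 ∨ x = e 7 := Iff.rfl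

lemma pr_of_mem_S000 {x : G} (h : x ∈ S000) : pr x = 0 := by
  rcases mem_S000.1 h with rfl | rfl | rfl | rfl <;> rfl

lemma zero_notMem_pts : (0 : W) ∉ pts := by decide

lemma mem_T_of_pr_mem {t : ZMod 3} {x : G} (h : pr x ∈ pts) :
    x ∈ T t ↔ cf (pr x) ⬝ᵥ x = t * shift (pr x) ∧ cf' (pr x) ⬝ᵥ x = 0 := by
  constructor
  · rintro (h0 | h0)
    · rw [pr_of_mem_S000 h0] at h
      exact absurd h zero_notMem_pts
    · exact h0.2
  · exact fun h0 => Or.inr ⟨h, h0⟩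

lemma mem_T_of_pr_zero {t : ZMod 3} {x : G} (h : pr x = 0) : x ∈ T t ↔ x ∈ S000 := by
  constructor
  · rintro (h0 | h0)
    · exact h0
    · rw [h] at h0
      exact absurd h0.1 zero_notMem_pts
  · exact Or.inl

lemma pr_mem_of_mem_T {t : ZMod 3} {x : G} (h : x ∈ T t) : pr x = 0 ∨ pr x ∈ pts :=
  h.imp pr_of_mem_S000 And.left

/-- The subgroup `⟨v₁, …, v₅⟩`. -/
def V : Submodule (ZMod 3) G := LinearMap.ker pr

/-- The direction space of the coset over `h`: the part of `T t` over `h ∈ pts` is a coset of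
`Vh h`. -/
def Vh (h : W) : Submodule (ZMod 3) G where
  carrier := {x | pr x = 0 ∧ cf h ⬝ᵥ x = 0 ∧ cf' h ⬝ᵥ x = 0}
  zero_mem' := by simp
  add_mem' := by
    rintro a b ⟨h1, h2, h3⟩ ⟨h4, h5, h6⟩
    simp [dotProduct_add, *]
  smul_mem' := by
    rintro c a ⟨h1, h2, h3⟩
    simp [dotProduct_smul, *]

lemma mem_V {x : G} : x ∈ V ↔ pr x = 0 := Iff.rfl
lemma mem_Vh {h : W} {x : G} :
    x ∈ Vh h ↔ pr x = 0 ∧ cf h ⬝ᵥ x = 0 ∧ cf' h ⬝ᵥ x = 0 := Iff.rfl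

lemma add_mem_T_iff {t : ZMod 3} {u z : G} (hu : u ∈ T t) (hp : pr u ∈ pts) (hz : pr z = 0) :
    u + z ∈ T t ↔ z ∈ Vh (pr u) := by
  have hq : pr (u + z) = pr u := by rw [map_add, hz, add_zero]
  rw [mem_T_of_pr_mem (by rwa [hq]), hq, mem_Vh, dotProduct_add, dotProduct_add]
  rw [mem_T_of_pr_mem hp] at hu
  simp [hu.1, hu.2, hz]

lemma S_eq : S = T 0 := by
  ext x
  have h8 : ∀ y : G, x = y ↔ x 0 = y 0 ∧ x 1 = y 1 ∧ x 2 = y 2 ∧ x 3 = y 3 ∧ x 4 = y 4 ∧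
      x 5 = y 5 ∧ x 6 = y 6 ∧ x 7 = y 7 := fun y => by
    rw [funext_iff]; simp [Fin.forall_fin_succ]
  simp only [S, Set.mem_union, or_assoc, T, Set.mem_ofPred_eq]
  refine or_congr Iff.rfl ?_
  simp only [pts, List.mem_cons, List.not_mem_nil, or_false, or_and_right]
  have aux : ∀ (p : W) (A : G → W → Prop), (pr x = p ∧ A x (pr x)) ↔ (pr x = p ∧ A x p) := by
    rintro p A; constructor <;> rintro ⟨rfl, h⟩ <;> exact ⟨rfl, h⟩
  have aux' := fun p => aux p (fun x q => cf q ⬝ᵥ x = 0 * shift q ∧ cf' q ⬝ᵥ x = 0)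
  simp only [aux']
  refine or_congr ?_ (or_congr ?_ (or_congr ?_ (or_congr ?_ (or_congr ?_ (or_congr ?_
    (or_congr ?_ (or_congr ?_ (or_congr ?_ ?_))))))))
  all_goals
    simp only [S100, S010, S001, S110, S101, S011, S111, S211, S121, S112, Set.mem_ofPred_eq, h8]
    simp [w1, w2, w3, v1, v2, v3, v4, v5, e, pr_apply, cf_values, cf'_values, dotProduct, Fin.sum_univ_succ]
    try grind

/-! ### Affine lines in the support, and what they allow inside `T` -/

/-- For a direction `d` of an affine line contained in `pts ∪ {0}`, a point of that line. The
value at other `d` plays no role. -/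
def base (d : W) : W :=
  if d.1 = 0 then
    if d.2.1 = 0 then (1, 1, 0)
    else if d.2.2 = 0 then (1, 0, 1)
    else (1, 1, 2)
  else if d.2.1 = 0 then
    if d.2.2 = 0 then (0, 1, 1) else (1, 1, 2)
  else (1, 2, 1)

/-- The directions of the affine lines contained in `pts ∪ {0}`: six of them up to sign. -/
def dirs : List W :=
  [(0, 0, 1), (0, 0, 2), (0, 1, 0), (0, 2, 0), (0, 1, 2), (0, 2, 1), (1, 0, 0), (2, 0, 0),
    (1, 0, 2), (2, 0, 1), (1, 2, 0), (2, 1, 0)]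

set_option synthInstance.maxHeartbeats 400000 in
set_option synthInstance.maxSize 10000 in
/-- An affine line in `pts ∪ {0}` avoids `0`, and is the only such line with its direction, as it
passes through `base d`. -/
lemma line_unique : ∀ d h : W, d ≠ 0 → (h = 0 ∨ h ∈ pts) → (h + d = 0 ∨ h + d ∈ pts) →
    (h + (2 : ZMod 3) • d = 0 ∨ h + (2 : ZMod 3) • d ∈ pts) →
    d ∈ dirs ∧ (∀ c : ZMod 3, h + c • d ∈ pts) ∧ ∃ c : ZMod 3, base d = h + c • d := by
  decide +kernel

lemma line_of_mem {t : ZMod 3} {u y : G} (hy : pr y ≠ 0) (hu : ∀ c : ZMod 3, u + c • y ∈ T t) :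
    pr y ∈ dirs ∧ (∀ c : ZMod 3, pr u + c • pr y ∈ pts) ∧
      ∃ c : ZMod 3, base (pr y) = pr u + c • pr y := by
  have h : ∀ c : ZMod 3, pr u + c • pr y = 0 ∨ pr u + c • pr y ∈ pts := fun c => by
    simpa using pr_mem_of_mem_T (hu c)
  refine line_unique (pr y) (pr u) hy ?_ ?_ (h 2)
  · simpa using h 0
  · simpa using h 1

/-- The span of `y` and of `{z ∈ V | cf p z = cf q z = 0}`, where `p` and `q = p + pr y` are two
points of the line of direction `pr y` in `pts`. It has dimension at most `4` when
`pr y ∈ dirs`. -/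
def thick (y : G) : Set G :=
  {z | ∃ c : ZMod 3, pr (z - c • y) = 0 ∧ cf (base (pr y)) ⬝ᵥ (z - c • y) = 0 ∧
    cf (base (pr y) + pr y) ⬝ᵥ (z - c • y) = 0}

lemma add_mem_thick {y z z' : G} (h : z ∈ thick y) (h' : z' ∈ thick y) : z + z' ∈ thick y := by
  obtain ⟨c, h1, h2, h3⟩ := h
  obtain ⟨c', h1', h2', h3'⟩ := h'
  have : z + z' - (c + c') • y = (z - c • y) + (z' - c' • y) := by module
  refine ⟨c + c', ?_, ?_, ?_⟩ <;> simp only [map_add, dotProduct_add, *, add_zero]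

/-- If `u + U ⊆ T t` for a subspace `U` with an element `y ∉ V`, then `U ⊆ thick y`. Indeed for
`b ∈ U` the points `u + b + c y` lie over the unique line in direction `pr y`, so `b` differs by a
multiple of `y` from an element `z ∈ U ∩ V`, and translation by `z` preserves the cosets
over all points of that line. -/
lemma subset_thick {t : ZMod 3} {u y : G} {U : Submodule (ZMod 3) G}
    (hU : ∀ b ∈ U, u + b ∈ T t) (hyU : y ∈ U) (hy : pr y ≠ 0) {b : G} (hb : b ∈ U) :
    b ∈ thick y := by
  obtain ⟨-, hp, i, hi⟩ := line_of_mem hy fun c => hU _ (U.smul_mem c hyU)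
  obtain ⟨-, -, j, hj⟩ := line_of_mem (u := u + b) hy fun c => by
    rw [add_assoc]; exact hU _ (U.add_mem hb (U.smul_mem c hyU))
  have hz0 : pr (b - (i - j) • y) = 0 := by
    rw [map_add, hi] at hj
    rw [map_sub, map_smul, sub_smul]
    linear_combination -hj
  have hzU : b - (i - j) • y ∈ U := U.sub_mem hb (U.smul_mem _ hyU)
  have key : ∀ c : ZMod 3, b - (i - j) • y ∈ Vh (pr u + c • pr y) := fun c => by
    have h1 := hU _ (U.smul_mem c hyU)
    have h2 := hU _ (U.add_mem (U.smul_mem c hyU) hzU)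
    have h3 : pr (u + c • y) = pr u + c • pr y := by simp
    rw [← add_assoc, add_mem_T_iff h1 (h3 ▸ hp c) hz0, h3] at h2
    exact h2
  refine ⟨i - j, hz0, ?_, ?_⟩
  · rw [hi]; exact (key i).2.1
  · have : base (pr y) + pr y = pr u + (i + 1) • pr y := by rw [hi]; module
    rw [this]; exact (key _).2.1

/-- `thick y` has dimension at most `4`, in the form that four coordinates determine an
element. -/
lemma exists_coords {y : G} (hy : pr y ∈ dirs) :
    ∃ J : Fin 4 → Fin 8, ∀ z ∈ thick y, (∀ i, z (J i) = 0) → z = 0 := by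
  -- A coordinate `i < 3` with `y i ≠ 0` removes the multiple of `y`; the coordinates `j k l`
  -- then detect the elements of `V` annihilated by the functionals at `p` and `q`.
  have key : ∀ (i j k l : Fin 8) (p q : W), i < 3 → y i ≠ 0 → base (pr y) = p → p + pr y = q →
      (∀ z : G, pr z = 0 → cf p ⬝ᵥ z = 0 → cf q ⬝ᵥ z = 0 →
        z j = 0 → z k = 0 → z l = 0 → z = 0) →
      ∃ J : Fin 4 → Fin 8, ∀ z ∈ thick y, (∀ i, z (J i) = 0) → z = 0 := by
    rintro i j k l _ _ hi hyi rfl rfl h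
    refine ⟨![i, j, k, l], ?_⟩
    rintro z ⟨c, h1, h2, h3⟩ hz
    have hz0 : z i = 0 := hz 0
    have hc : (z - c • y) i = 0 := by
      have h1' := h1
      simp only [pr_apply, Prod.mk_eq_zero] at h1'
      obtain rfl | rfl | rfl : i = 0 ∨ i = 1 ∨ i = 2 := by omega
      exacts [h1'.1, h1'.2.1, h1'.2.2]
    have hc0 : c = 0 := by simpa [hz0, hyi] using hc
    rw [hc0, zero_smul, sub_zero] at h1 h2 h3
    exact h z h1 h2 h3 (hz 1) (hz 2) (hz 3)
  generalize hd : pr y = d at hy key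
  simp only [pr_apply] at hd
  simp only [dirs, List.mem_cons, List.not_mem_nil, or_false] at hy
  rcases hy with rfl | rfl | rfl | rfl | rfl | rfl | rfl | rfl | rfl | rfl | rfl | rfl <;>
    simp only [Prod.mk.injEq] at hd <;> obtain ⟨hd0, hd1, hd2⟩ := hd
  on_goal 1 => refine key 2 3 4 5 (1, 1, 0) (1, 1, 1) (by decide) (by rw [hd2]; decide) rfl rfl ?_
  on_goal 2 => refine key 2 3 4 5 (1, 1, 0) (1, 1, 2) (by decide) (by rw [hd2]; decide) rfl rfl ?_
  on_goal 3 => refine key 1 3 4 6 (1, 0, 1) (1, 1, 1) (by decide) (by rw [hd1]; decide) rfl rfl ?_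
  on_goal 4 => refine key 1 3 4 6 (1, 0, 1) (1, 2, 1) (by decide) (by rw [hd1]; decide) rfl rfl ?_
  on_goal 5 => refine key 1 3 4 5 (1, 1, 2) (1, 2, 1) (by decide) (by rw [hd1]; decide) rfl rfl ?_
  on_goal 6 => refine key 1 3 4 7 (1, 1, 2) (1, 0, 0) (by decide) (by rw [hd1]; decide) rfl rfl ?_
  on_goal 7 => refine key 0 3 4 5 (0, 1, 1) (1, 1, 1) (by decide) (by rw [hd0]; decide) rfl rfl ?_
  on_goal 8 => refine key 0 3 4 5 (0, 1, 1) (2, 1, 1) (by decide) (by rw [hd0]; decide) rfl rfl ?_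
  on_goal 9 => refine key 0 3 5 6 (1, 1, 2) (2, 1, 1) (by decide) (by rw [hd0]; decide) rfl rfl ?_
  on_goal 10 => refine key 0 3 5 6 (1, 1, 2) (0, 1, 0) (by decide) (by rw [hd0]; decide) rfl rfl ?_
  on_goal 11 => refine key 0 4 5 6 (1, 2, 1) (2, 1, 1) (by decide) (by rw [hd0]; decide) rfl rfl ?_
  on_goal 12 => refine key 0 4 5 6 (1, 2, 1) (0, 0, 1) (by decide) (by rw [hd0]; decide) rfl rfl ?_
  all_goals
    intro z h1 h2 h3 h4 h5 h6
    simp [cf_values, pr_apply, dotProduct, Fin.sum_univ_succ] at h1 h2 h3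
    ext i; fin_cases i <;> simp <;> grind

/-- `Vh h` is a hyperplane of `V` when `cf' h = 0`, so any element of `Vh k` outside it gives
`V = Vh h + Vh k`. -/
lemma V_le_sup {h k : W} {k0 : G} (hk : k0 ∈ Vh k) (h1 : cf h ⬝ᵥ k0 = 1) (h2 : cf' h = 0) :
    V ≤ Vh h ⊔ Vh k := by
  intro x hx
  rw [mem_V] at hx
  refine Submodule.mem_sup.2 ⟨x - (cf h ⬝ᵥ x) • k0, ?_, (cf h ⬝ᵥ x) • k0,
    Submodule.smul_mem _ _ hk, by abel⟩
  rw [mem_Vh]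
  simp [dotProduct_sub, dotProduct_smul, h1, h2, hx, hk.1]

lemma finrank_V : Module.finrank (ZMod 3) V = 5 := by
  have h := LinearMap.finrank_range_add_finrank_ker pr
  have hs : LinearMap.range pr = ⊤ := LinearMap.range_eq_top.2 fun p =>
    ⟨![p.1, p.2.1, p.2.2, 0, 0, 0, 0, 0], rfl⟩
  rw [hs] at h
  rw [finrank_top] at h
  simp at h
  exact Nat.add_left_cancel (n := 3) h

/-- The element `h.1 w₁ + h.2.1 w₂ + h.2.2 w₃` of `G`, a section of `pr`. -/
def wt (h : W) : G := ![h.1, h.2.1, h.2.2, 0, 0, 0, 0, 0]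

lemma wt_eq (h : W) :
    wt h = h.1 • wt (1, 0, 0) + h.2.1 • wt (0, 1, 0) + h.2.2 • wt (0, 0, 1) := by
  funext i
  fin_cases i <;> simp [wt]

lemma pr_wt (h : W) : pr (wt h) = h := rfl

lemma wt_mem_T : ∀ h ∈ pts, wt h ∈ T 0 := by
  intro h hh
  refine Or.inr ⟨hh, ?_⟩
  rw [pr_wt, zero_mul]
  revert h
  decide +kernel

/-! ### Linear maps carrying `T 0` to `T 1` preserve `V` -/

variable {α : G ≃ₗ[ZMod 3] G}

/-- If `V = Vh h + Vh k`, then `α` maps `Vh h ∩ Vh k` into `V`: were `α x ∉ V` for some `x` there,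
the five-dimensional space `α V` would lie in `thick (α x)`, which has dimension at most `4`. -/
lemma pr_map_eq_zero (hα : ∀ g, g ∈ T 0 → α g ∈ T 1) {h k : W} (hh : h ∈ pts) (hk : k ∈ pts)
    (hV : V ≤ Vh h ⊔ Vh k) {x : G} (hxh : x ∈ Vh h) (hxk : x ∈ Vh k) : pr (α x) = 0 := by
  by_contra hx
  have hU : ∀ q ∈ pts, ∀ b ∈ (Vh q).map (α : G →ₗ[ZMod 3] G), α (wt q) + b ∈ T 1 := by
    rintro q hq _ ⟨b, hb, rfl⟩
    have := hα (wt q + b) ((add_mem_T_iff (wt_mem_T q hq) hq hb.1).2 hb)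
    simpa using this
  have hsub : ∀ v ∈ V, α v ∈ thick (α x) := by
    intro v hv
    obtain ⟨a, ha, b, hb, rfl⟩ := Submodule.mem_sup.1 (hV hv)
    rw [map_add]
    exact add_mem_thick
      (subset_thick (hU h hh) (Submodule.mem_map_of_mem hxh) hx (Submodule.mem_map_of_mem ha))
      (subset_thick (hU k hk) (Submodule.mem_map_of_mem hxk) hx (Submodule.mem_map_of_mem hb))
  have hdir : pr (α x) ∈ dirs :=
    (line_of_mem hx fun c => hU h hh _
      (Submodule.smul_mem _ c (Submodule.mem_map_of_mem hxh))).1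
  obtain ⟨J, hJ⟩ := exists_coords hdir
  let f : V →ₗ[ZMod 3] (Fin 4 → ZMod 3) :=
    LinearMap.funLeft (ZMod 3) (ZMod 3) J ∘ₗ (α : G →ₗ[ZMod 3] G) ∘ₗ V.subtype
  have hf : Function.Injective f := by
    rw [← LinearMap.ker_eq_bot, LinearMap.ker_eq_bot']
    intro v hv
    have := hJ (α v) (hsub v v.2) fun i => congrFun hv i
    simpa using this
  have := LinearMap.finrank_le_finrank_of_injective hf
  rw [finrank_V] at this
  simp at this

/-- Each of `v₁, …, v₅` lies in an intersection `Vh h ∩ Vh k` to which `pr_map_eq_zero` applies. -/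
lemma map_V (hα : ∀ g, g ∈ T 0 → α g ∈ T 1) : V.map (α : G →ₗ[ZMod 3] G) = V := by
  have hA : V ≤ Vh (0, 1, 0) ⊔ Vh (0, 0, 1) :=
    V_le_sup (k0 := e 4) (by rw [mem_Vh]; decide +kernel) (by decide +kernel) (by decide +kernel)
  have hB : V ≤ Vh (0, 1, 0) ⊔ Vh (1, 1, 0) :=
    V_le_sup (k0 := e 4 + e 6) (by rw [mem_Vh]; decide +kernel) (by decide +kernel) (by decide +kernel)
  have hC : V ≤ Vh (0, 0, 1) ⊔ Vh (1, 0, 1) :=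
    V_le_sup (k0 := e 3 + e 5) (by rw [mem_Vh]; decide +kernel) (by decide +kernel) (by decide +kernel)
  have h3 : pr (α (e 3)) = 0 := pr_map_eq_zero hα (by decide) (by decide) hB
    (by rw [mem_Vh]; decide +kernel) (by rw [mem_Vh]; decide +kernel)
  have h4 : pr (α (e 4)) = 0 := pr_map_eq_zero hα (by decide) (by decide) hC
    (by rw [mem_Vh]; decide +kernel) (by rw [mem_Vh]; decide +kernel)
  have h5 : pr (α (e 5)) = 0 := pr_map_eq_zero hα (by decide) (by decide) hA
    (by rw [mem_Vh]; decide +kernel) (by rw [mem_Vh]; decide +kernel)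
  have h6 : pr (α (e 6)) = 0 := pr_map_eq_zero hα (by decide) (by decide) hA
    (by rw [mem_Vh]; decide +kernel) (by rw [mem_Vh]; decide +kernel)
  have h7 : pr (α (e 7)) = 0 := pr_map_eq_zero hα (by decide) (by decide) hA
    (by rw [mem_Vh]; decide +kernel) (by rw [mem_Vh]; decide +kernel)
  refine Submodule.eq_of_le_of_finrank_eq ?_ (LinearEquiv.finrank_map_eq α V)
  rintro _ ⟨x, hx, rfl⟩
  have hx' : x = x 3 • e 3 + x 4 • e 4 + x 5 • e 5 + x 6 • e 6 + x 7 • e 7 := by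
    have hx0 : x 0 = 0 ∧ x 1 = 0 ∧ x 2 = 0 := by simpa [mem_V, pr_apply] using hx
    funext i
    fin_cases i <;> simp [e, hx0]
  rw [mem_V]
  change pr (α x) = 0
  rw [hx']
  simp [h3, h4, h5, h6, h7]

/-! ### The induced map on `W` is the identity -/

instance (h : W) (x : G) : Decidable (x ∈ Vh h) :=
  inferInstanceAs (Decidable (pr x = 0 ∧ cf h ⬝ᵥ x = 0 ∧ cf' h ⬝ᵥ x = 0))

/-- The four elements of `S000`, that is, of `T t ∩ V`. -/
def L : Fin 4 → G := ![e 3, e 5, e 6, e 7]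

lemma mem_S000_iff {x : G} : x ∈ S000 ↔ ∃ i, x = L i := by
  simp [mem_S000, L, Fin.exists_fin_succ]

/-- The index `(0, 1, 0)` is recognised by `Vh (0, 1, 0)` containing all of `S000`. -/
lemma eq_010_of_mem_Vh : ∀ k ∈ pts, (∀ i, L i ∈ Vh k) → k = (0, 1, 0) := by decide +kernel

/-- The index `(1, 0, 0)` is recognised by `Vh (1, 0, 0)` containing exactly two of the four
elements of `S000`, and neither the sum nor the difference of the other two. -/
lemma eq_100_of_mem_Vh : ∀ k ∈ pts, ∀ a, L a ∈ Vh k → ∀ d, L d ∈ Vh k → a ≠ d → ∀ b, L b ∉ Vh k →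
    ∀ c, L c ∉ Vh k → b ≠ c → L b + L c ∉ Vh k → L b - L c ∉ Vh k → k = (1, 0, 0) := by
  decide +kernel

/-- The index `(0, 0, 1)` is recognised by `Vh (0, 0, 1)` containing `v₃`, `v₄` and
exactly one of `v₁, v₅`, the partition `{v₁, v₅}, {v₃, v₄}` being read off from `Vh (1, 0, 0)`. -/
lemma eq_001_of_mem_Vh : ∀ k ∈ pts, ∀ a, L a ∈ Vh (1, 0, 0) → L a ∉ Vh k →
    ∀ b, L b ∉ Vh (1, 0, 0) → L b ∈ Vh k → ∀ c, L c ∉ Vh (1, 0, 0) → L c ∈ Vh k → b ≠ c →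
    ∀ d, L d ∈ Vh (1, 0, 0) → L d ∈ Vh k → k = (0, 0, 1) := by
  decide +kernel

lemma L_mem_Vh : ∀ i, L i ∈ Vh (0, 1, 0) := by decide +kernel

/-- The map that `α` induces on `W = G / V` permutes `pts` compatibly with the spaces `Vh` and
with `S000`, and hence is the identity, by the three recognition lemmas. -/
lemma pr_map_wt (hα : ∀ g, g ∈ T 0 ↔ α g ∈ T 1) (h : W) : pr (α (wt h)) = h := by
  have hV := map_V (fun g => (hα g).1)
  have hpr : ∀ x, pr (α x) = 0 ↔ pr x = 0 := fun x => by
    rw [← mem_V, ← mem_V]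
    conv_lhs => rw [← hV]
    constructor
    · rintro ⟨x', hx', h⟩
      rwa [← α.injective h]
    · exact fun hx => Submodule.mem_map_of_mem hx
  have hP : ∀ q ∈ pts, pr (α (wt q)) ∈ pts := fun q hq =>
    (pr_mem_of_mem_T ((hα _).1 (wt_mem_T q hq))).resolve_left fun h0 => by
      rw [hpr, pr_wt] at h0
      exact zero_notMem_pts (h0 ▸ hq)
  have hQ : ∀ q ∈ pts, ∀ x, pr x = 0 → (x ∈ Vh q ↔ α x ∈ Vh (pr (α (wt q)))) := by
    intro q hq x hx
    have h1 := add_mem_T_iff (wt_mem_T q hq) hq hx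
    have h2 := add_mem_T_iff ((hα _).1 (wt_mem_T q hq)) (hP q hq) ((hpr x).2 hx)
    rw [pr_wt] at h1
    rw [← h1, ← h2, hα, map_add]
  have hL0 : ∀ i, pr (L i) = 0 := fun i => pr_of_mem_S000 (mem_S000_iff.2 ⟨i, rfl⟩)
  have hL : ∀ x, (∃ i, x = L i) ↔ ∃ i, α x = L i := by
    intro x
    by_cases hx : pr x = 0
    · rw [← mem_S000_iff, ← mem_S000_iff, ← mem_T_of_pr_zero hx (t := 0),
        ← mem_T_of_pr_zero ((hpr x).2 hx) (t := 1), hα]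
    · exact ⟨fun ⟨i, h⟩ => absurd (h ▸ hL0 i) hx,
        fun ⟨i, h⟩ => absurd ((hpr x).1 (h ▸ hL0 i)) hx⟩
  have m1 : ((1, 0, 0) : W) ∈ pts := by decide
  have m2 : ((0, 1, 0) : W) ∈ pts := by decide
  have m3 : ((0, 0, 1) : W) ∈ pts := by decide
  have hk2 : pr (α (wt (0, 1, 0))) = (0, 1, 0) := by
    refine eq_010_of_mem_Vh _ (hP _ m2) fun i => ?_
    obtain ⟨x, hx⟩ := α.surjective (L i)
    obtain ⟨j, rfl⟩ := (hL x).2 ⟨i, hx⟩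
    rw [← hx, ← hQ _ m2 _ (hL0 j)]
    exact L_mem_Vh j
  obtain ⟨a, ha⟩ := (hL (e 3)).1 ⟨0, rfl⟩
  obtain ⟨b, hb⟩ := (hL (e 5)).1 ⟨1, rfl⟩
  obtain ⟨c, hc⟩ := (hL (e 6)).1 ⟨2, rfl⟩
  obtain ⟨d, hd⟩ := (hL (e 7)).1 ⟨3, rfl⟩
  have t1 := fun x hx => hQ _ m1 x hx
  have t3 := fun x hx => hQ _ m3 x hx
  have hbc : b ≠ c := by
    rintro rfl
    exact absurd (α.injective (hb.trans hc.symm)) (by decide)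
  have had : a ≠ d := by
    rintro rfl
    exact absurd (α.injective (ha.trans hd.symm)) (by decide)
  have hk1 : pr (α (wt (1, 0, 0))) = (1, 0, 0) := by
    refine eq_100_of_mem_Vh _ (hP _ m1) a ?_ d ?_ had b ?_ c ?_ hbc ?_ ?_
    · rw [← ha, ← t1 _ (by decide)]; decide +kernel
    · rw [← hd, ← t1 _ (by decide)]; decide +kernel
    · rw [← hb, ← t1 _ (by decide)]; decide +kernel
    · rw [← hc, ← t1 _ (by decide)]; decide +kernel
    · rw [← hb, ← hc, ← map_add, ← t1 _ (by decide)]; decide +kernel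
    · rw [← hb, ← hc, ← map_sub, ← t1 _ (by decide)]; decide +kernel
  rw [hk1] at t1
  have hk3 : pr (α (wt (0, 0, 1))) = (0, 0, 1) := by
    refine eq_001_of_mem_Vh _ (hP _ m3) a ?_ ?_ b ?_ ?_ c ?_ ?_ hbc d ?_ ?_
    · rw [← ha, ← t1 _ (by decide)]; decide +kernel
    · rw [← ha, ← t3 _ (by decide)]; decide +kernel
    · rw [← hb, ← t1 _ (by decide)]; decide +kernel
    · rw [← hb, ← t3 _ (by decide)]; decide +kernel
    · rw [← hc, ← t1 _ (by decide)]; decide +kernel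
    · rw [← hc, ← t3 _ (by decide)]; decide +kernel
    · rw [← hd, ← t1 _ (by decide)]; decide +kernel
    · rw [← hd, ← t3 _ (by decide)]; decide +kernel
  rw [wt_eq h]
  simp [hk1, hk2, hk3]

/-! ### The contradiction between the shifts -/

/-- Put `A, B, C = α w₁, α w₂, α w₃`. Then `cf h` takes the value `shift h` at
`h.1 A + h.2.1 B + h.2.2 C`. The equations for the six `h` with `shift h = 0` reduce those for
`(1, 1, 1)`, `(1, 2, 1)`, `(1, 1, 2)` to `s = 1`, `s + δ = -1`, `s - δ = -1`, where
`s = A 7 - B 5 - C 6`, which is inconsistent modulo `3`. -/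
lemma no_linearEquiv (hα : ∀ g, g ∈ T 0 ↔ α g ∈ T 1) : False := by
  have key : ∀ h ∈ pts, cf h ⬝ᵥ α (wt h) = shift h ∧ cf' h ⬝ᵥ α (wt h) = 0 := by
    intro h hh
    have hp := pr_map_wt hα h
    have := (mem_T_of_pr_mem (by rwa [hp])).1 ((hα _).1 (wt_mem_T h hh))
    rwa [hp, one_mul] at this
  have key' : ∀ a b c : ZMod 3, (a, b, c) ∈ pts →
      cf (a, b, c) ⬝ᵥ (a • α (wt (1, 0, 0)) + b • α (wt (0, 1, 0)) + c • α (wt (0, 0, 1))) =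
        shift (a, b, c) ∧
      cf' (a, b, c) ⬝ᵥ (a • α (wt (1, 0, 0)) + b • α (wt (0, 1, 0)) + c • α (wt (0, 0, 1))) =
        0 := by
    intro a b c h
    have := key _ h
    rw [wt_eq (a, b, c)] at this
    simpa only [map_add, map_smul] using this
  generalize α (wt (1, 0, 0)) = A at key'
  generalize α (wt (0, 1, 0)) = B at key'
  generalize α (wt (0, 0, 1)) = C at key'
  have hs : shift (1, 0, 0) = 0 ∧ shift (0, 1, 0) = 0 ∧ shift (0, 0, 1) = 0 ∧ shift (1, 1, 0) = 0 ∧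
    shift (1, 0, 1) = 0 ∧ shift (0, 1, 1) = 0 ∧ shift (1, 1, 1) = 1 ∧ shift (1, 2, 1) = -1 ∧
    shift (1, 1, 2) = -1 := by decide
  have q1 := key' 1 0 0 (by decide)
  have q2 := key' 0 1 0 (by decide)
  have q3 := key' 0 0 1 (by decide)
  have q4 := key' 1 1 0 (by decide)
  have q5 := key' 1 0 1 (by decide)
  have q6 := key' 0 1 1 (by decide)
  have q7 := key' 1 1 1 (by decide)
  have q8 := key' 1 2 1 (by decide)
  have q9 := key' 1 1 2 (by decide)
  clear key' key
  simp [cf_values, cf'_values, hs, dotProduct, Fin.sum_univ_succ] at q1 q2 q3 q4 q5 q6 q7 q8 q9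
  have h3 : (3 : ZMod 3) = 0 := rfl
  grind

/-! ### The digraph isomorphism -/

/-- The polynomial map `W → V`,
`(x, y, z) ↦ x y² v₁ + x z² v₂ + y² z v₃ + y z² v₄ + x y z v₅`. -/
def tw (p : W) : G :=
  ![0, 0, 0, p.1 * p.2.1 ^ 2, p.1 * p.2.2 ^ 2, p.2.1 ^ 2 * p.2.2, p.2.1 * p.2.2 ^ 2,
    p.1 * p.2.1 * p.2.2]

lemma pr_tw (p : W) : pr (tw p) = 0 := rfl

/-- The non-linear bijection `x ↦ x + tw (pr x)`. -/
def twist : G ≃ G where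
  toFun x := x + tw (pr x)
  invFun x := x - tw (pr x)
  left_inv x := by simp [pr_tw]
  right_inv x := by simp [pr_tw]

/-- Although `tw` is not linear, `tw q - tw p` lies in a coset of `Vh (q - p)` that depends on
`q - p` only, and it is the translation from `T 0` to `T 1` over `q - p`. -/
lemma tw_sub : ∀ p q : W, q - p ∈ pts → cf (q - p) ⬝ᵥ (tw q - tw p) = shift (q - p) ∧
    cf' (q - p) ⬝ᵥ (tw q - tw p) = 0 := by
  decide +kernel

lemma twist_iso (x y : G) : cayleyRel (T 0) x y ↔ cayleyRel (T 1) (twist x) (twist y) := by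
  have h : twist y - twist x = (y - x) + (tw (pr y) - tw (pr x)) := by
    simp only [twist, Equiv.coe_fn_mk]; abel
  have hp : pr (twist y - twist x) = pr (y - x) := by simp [h, pr_tw]
  simp only [cayleyRel]
  by_cases h0 : pr (y - x) = 0
  · rw [mem_T_of_pr_zero h0, mem_T_of_pr_zero (hp.trans h0), h]
    rw [map_sub, sub_eq_zero] at h0
    simp [h0]
  by_cases h1 : pr (y - x) ∈ pts
  · rw [mem_T_of_pr_mem h1, mem_T_of_pr_mem (hp ▸ h1), hp, h, dotProduct_add, dotProduct_add]
    rw [map_sub] at h1 ⊢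
    obtain ⟨h2, h3⟩ := tw_sub _ _ h1
    simp [h2, h3]
  · exact ⟨fun h => ((pr_mem_of_mem_T h).elim h0 h1).elim,
      fun h => ((pr_mem_of_mem_T h).elim (hp ▸ h0) (hp ▸ h1)).elim⟩

end Spiga

/-- Spiga's Cayley digraph `Cay⃗((ℤ_3)^8; S)` is not a DCI digraph; in particular,
`(ℤ_3)^8` is not a DCI group. -/
theorem spiga_not_DCI :
    ¬ IsDCIDigraph Spiga.S ∧ ¬ IsDCIGroup (Fin 8 → ZMod 3) := by
  have main : ¬ IsDCIDigraph Spiga.S := by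
    intro h
    rw [Spiga.S_eq] at h
    obtain ⟨α, hα⟩ := h (Spiga.T 1) ⟨Spiga.twist, Spiga.twist_iso⟩
    -- additive maps between `ZMod 3`-modules are linear
    let β : Spiga.G ≃ₗ[ZMod 3] Spiga.G :=
      { α with map_smul' := ZMod.map_smul (α : Spiga.G →+ Spiga.G) }
    refine Spiga.no_linearEquiv (α := β) fun g => ?_
    rw [← hα]
    exact (α.injective.mem_set_image).symm
  exact ⟨main, fun h => main (h _)⟩
end
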